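/- Let Γ = ℤ^5 ⋊ ℤ/4 where the generator of ℤ/4 acts on ℤ^5 by the matrix [[-1,0,0,0,0],[0,-1,0,0,0],[0,0,0,0,-1],[0,0,1,0,1],[0,0,0,-1,1]]. Then H^1(Γ,ℤ) ≅ ℤ; H^2(Γ,ℤ) ≅ ℤ^2 ⊕ ℤ/4 ⊕ (ℤ/2)^2; H^3(Γ,ℤ) ≅ ℤ^2 ⊕ (ℤ/4)^2 ⊕ ℤ/2; H^4(Γ,ℤ) ≅ ℤ ⊕ (ℤ/4)^2 ⊕ (ℤ/2)^5; H^5(Γ,ℤ) ≅ ℤ ⊕ ℤ/4 ⊕ (ℤ/2)^6; and H^i(Γ,ℤ) ≅ (ℤ/4)^2 ⊕ (ℤ/2)^6 for all i ≥ 6. -/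

import Mathlib

open Matrix

namespace Crystal

/-- The lattice `ℤ^n`, written multiplicatively so that it can be a factor of a semidirect
product of groups. -/
abbrev Lat (n : ℕ) : Type := Multiplicative (Fin n → ℤ)

/-- The invertible integer matrix determined by `M` with `M ^ (m + 1) = 1`. -/
def matUnit {n : ℕ} (M : Matrix (Fin n) (Fin n) ℤ) (m : ℕ) (hm : M ^ (m + 1) = 1) :
    (Matrix (Fin n) (Fin n) ℤ)ˣ :=
  ⟨M, M ^ m, by rw [← pow_succ']; exact hm, by rw [← pow_succ]; exact hm⟩

/-- Linear automorphisms of `ℤ^n` as multiplicative automorphisms of the multiplicative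
version of `ℤ^n`. -/
def linToAut (n : ℕ) : ((Fin n → ℤ) ≃ₗ[ℤ] (Fin n → ℤ)) →* MulAut (Lat n) :=
  MonoidHom.mk' (fun e => AddEquiv.toMultiplicative e.toAddEquiv) (fun _ _ => rfl)

/-- An invertible integer matrix acts on the (multiplicative) lattice `ℤ^n` by (left)
matrix-vector multiplication. -/
def glToAut (n : ℕ) : (Matrix (Fin n) (Fin n) ℤ)ˣ →* MulAut (Lat n) :=
  (linToAut n).comp
    ((LinearMap.GeneralLinearGroup.generalLinearEquiv ℤ (Fin n → ℤ)).toMonoidHom.comp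
      (Matrix.GeneralLinearGroup.toLin).toMonoidHom)

/-- The homomorphism from `ℤ/m` (written multiplicatively) to a group `G` sending the
generator `1` to a chosen element `α` satisfying `α ^ m = 1`. -/
def zmodHom {G : Type*} [Group G] (m : ℕ) [NeZero m] (α : G) (hα : α ^ m = 1) :
    Multiplicative (ZMod m) →* G :=
  MonoidHom.mk' (fun g => α ^ (g.toAdd.val)) (by
    intro a b
    show α ^ (ZMod.val (a.toAdd + b.toAdd)) = α ^ (ZMod.val a.toAdd) * α ^ (ZMod.val b.toAdd)
    rw [ZMod.val_add, ← pow_eq_pow_mod _ hα, pow_add])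

/-- The action of `ℤ/q` on the lattice `ℤ^n` in which the generator `1` of `ℤ/q` acts by left
multiplication by the integer matrix `M`; `M` is required to satisfy `M ^ q = 1`. -/
def matAction {n : ℕ} (q : ℕ) [NeZero q] (M : Matrix (Fin n) (Fin n) ℤ)
    (hq : M ^ q = 1) : Multiplicative (ZMod q) →* MulAut (Lat n) :=
  zmodHom q (glToAut n (matUnit M (q - 1) (by
      rwa [Nat.sub_add_cancel (Nat.one_le_iff_ne_zero.2 (NeZero.ne q))])))
    (by
      rw [← map_pow]
      convert map_one (glToAut n)
      ext i j
      rw [Units.val_pow_eq_pow_val]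
      simp [matUnit, hq])

/-- The crystallographic group `ℤ^n ⋊ ℤ/q` in which the generator `1` of `ℤ/q` acts on the
lattice `ℤ^n` by left multiplication by the integer matrix `M` (with `M ^ q = 1`). -/
abbrev Crys {n : ℕ} (q : ℕ) [NeZero q] (M : Matrix (Fin n) (Fin n) ℤ) (hq : M ^ q = 1) : Type :=
  SemidirectProduct (Lat n) (Multiplicative (ZMod q)) (matAction q M hq)


open CategoryTheory groupCohomology

variable {k : Type} [CommRing k]

lemma comp_contractNth {G H : Type*} [Monoid G] [Monoid H] (f : G →* H) {n : ℕ}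
    (j : Fin (n + 1)) (g : Fin (n + 1) → G) (i : Fin n) :
    f (Fin.contractNth j (· * ·) g i) = Fin.contractNth j (· * ·) (fun l => f (g l)) i := by
  rcases lt_trichotomy (i : ℕ) j with h | h | h
  · rw [Fin.contractNth_apply_of_lt _ _ _ _ h, Fin.contractNth_apply_of_lt _ _ _ _ h]
  · rw [Fin.contractNth_apply_of_eq _ _ _ _ h, Fin.contractNth_apply_of_eq _ _ _ _ h,
      _root_.map_mul]
  · rw [Fin.contractNth_apply_of_gt _ _ _ _ h, Fin.contractNth_apply_of_gt _ _ _ _ h]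

/-- The map of inhomogeneous cochain complexes induced (contravariantly in the group,
covariantly in the coefficients) by a group homomorphism `f : H →* G` together with a
compatible linear map `τ : A → B` of coefficients. -/
def cochainsMap {G H : Type} [Group G] [Group H] (A : Rep k G) (B : Rep k H)
    (f : H →* G) (τ : A →ₗ[k] B)
    (hcomp : ∀ (h : H) (a : A), τ (A.ρ (f h) a) = B.ρ h (τ a)) :
    inhomogeneousCochains A ⟶ inhomogeneousCochains B where
  f n := ModuleCat.ofHom
    { toFun := fun F v => τ (F (fun i => f (v i)))
      map_add' := fun x y => by funext v; simp
      map_smul' := fun r x => by funext v; simp }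
  comm' i j hij := by
    have hij' : i + 1 = j := hij
    subst hij'
    rw [inhomogeneousCochains.d_def, inhomogeneousCochains.d_def]
    ext F v
    show (inhomogeneousCochains.d B i).hom (fun w => τ (F (fun l => f (w l)))) v
      = τ ((inhomogeneousCochains.d A i).hom F (fun l => f (v l)))
    simp only [inhomogeneousCochains.d_hom_apply, map_add, map_sum, _root_.map_smul]
    congr 1
    · exact (hcomp (v 0) _).symm
    · refine Finset.sum_congr rfl fun j' _ => ?_
      have hc : (fun l => f (j'.contractNth (· * ·) v l))
          = j'.contractNth (· * ·) (fun l => f (v l)) := by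
        funext l
        exact comp_contractNth f j' v l
      rw [hc]

lemma cochainsMap_eq_id {G : Type} [Group G] (A : Rep k G) (f : G →* G) (τ : A →ₗ[k] A)
    (hcomp : ∀ (h : G) (a : A), τ (A.ρ (f h) a) = A.ρ h (τ a))
    (hf : ∀ x, f x = x) (hτ : ∀ a, τ a = a) :
    cochainsMap A A f τ hcomp = 𝟙 _ := by
  apply HomologicalComplex.Hom.ext
  funext n
  ext F v
  show τ (F (fun i => f (v i))) = F v
  simp only [hf, hτ]

lemma cochainsMap_comp {G H K : Type} [Group G] [Group H] [Group K]
    (A : Rep k G) (B : Rep k H) (C : Rep k K)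
    (f₁ : H →* G) (τ₁ : A →ₗ[k] B) (h₁ : ∀ (h : H) (a : A), τ₁ (A.ρ (f₁ h) a) = B.ρ h (τ₁ a))
    (f₂ : K →* H) (τ₂ : B →ₗ[k] C) (h₂ : ∀ (h : K) (a : B), τ₂ (B.ρ (f₂ h) a) = C.ρ h (τ₂ a))
    (f₃ : K →* G) (τ₃ : A →ₗ[k] C) (h₃ : ∀ (h : K) (a : A), τ₃ (A.ρ (f₃ h) a) = C.ρ h (τ₃ a))
    (hf : ∀ x, f₁ (f₂ x) = f₃ x) (hτ : ∀ a, τ₂ (τ₁ a) = τ₃ a) :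
    cochainsMap A B f₁ τ₁ h₁ ≫ cochainsMap B C f₂ τ₂ h₂ = cochainsMap A C f₃ τ₃ h₃ := by
  apply HomologicalComplex.Hom.ext
  funext n
  ext F v
  show τ₂ (τ₁ (F (fun i => f₁ (f₂ (v i))))) = τ₃ (F (fun i => f₃ (v i)))
  simp only [hf]
  exact hτ _

/-- Given an action `φ` of a group `G` on a group `L` and a representation `ψ` of `G` on a
`k`-module `V`, this is `H^j(L, V)` (with `L` acting trivially on the coefficients `V`),
endowed with the `G`-action functorially induced by the action of `G` on `L` and on `V`:
`g` acts via the conjugation automorphism `φ g⁻¹` of `L` and via `ψ g` on `V`. -/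
noncomputable def cohRep {G L V : Type} [Group G] [Group L] [AddCommGroup V] [Module k V]
    (φ : G →* MulAut L) (ψ : Representation k G V) (j : ℕ) : Rep k G :=
  Rep.of (X := groupCohomology (Rep.trivial k L V) j)
    { toFun := fun g => ModuleCat.Hom.hom <| HomologicalComplex.homologyMap
        (cochainsMap (Rep.trivial k L V) (Rep.trivial k L V) (φ g⁻¹).toMonoidHom (ψ g)
          (fun _ _ => rfl)) j
      map_one' := by
        have h := cochainsMap_eq_id (Rep.trivial k L V) (φ 1⁻¹).toMonoidHom (ψ 1)
          (fun _ _ => rfl) (fun x => by simp) (fun a => by simp)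
        exact congrArg ModuleCat.Hom.hom
          ((congrArg (fun m => HomologicalComplex.homologyMap m j) h).trans
            (HomologicalComplex.homologyMap_id _ j))
      map_mul' := fun g₁ g₂ => by
        have h := cochainsMap_comp (Rep.trivial k L V) (Rep.trivial k L V) (Rep.trivial k L V)
          (φ g₂⁻¹).toMonoidHom (ψ g₂) (fun _ _ => rfl)
          (φ g₁⁻¹).toMonoidHom (ψ g₁) (fun _ _ => rfl)
          (φ (g₁ * g₂)⁻¹).toMonoidHom (ψ (g₁ * g₂)) (fun _ _ => rfl)
          (fun x => by simp [_root_.mul_inv_rev]) (fun a => by simp)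
        exact congrArg ModuleCat.Hom.hom
          ((congrArg (fun m => HomologicalComplex.homologyMap m j) h.symm).trans
            (HomologicalComplex.homologyMap_comp _ _ j)) }


/-- `H^i(G, H^j(L, ℤ))`: the `i`-th cohomology of the cyclic group `ℤ/q` with coefficients in
the `j`-th cohomology of the lattice `ℤ^n` (with trivial `ℤ` coefficients), where the
`ℤ/q`-action on `H^j(ℤ^n, ℤ)` is the one functorially induced by the matrix action on the
lattice. -/
noncomputable abbrev cohOfCoh {n : ℕ} (q : ℕ) [NeZero q] (M : Matrix (Fin n) (Fin n) ℤ)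
    (hq : M ^ q = 1) (i j : ℕ) : ModuleCat ℤ :=
  groupCohomology
    (cohRep (matAction q M hq) (1 : Representation ℤ (Multiplicative (ZMod q)) ℤ) j) i

/-- `H^k(Γ, ℤ)` for `Γ = ℤ^n ⋊ ℤ/q`, with trivial coefficients `ℤ`. -/
noncomputable abbrev cohCrys {n : ℕ} (q : ℕ) [NeZero q] (M : Matrix (Fin n) (Fin n) ℤ)
    (hq : M ^ q = 1) (k : ℕ) : ModuleCat ℤ :=
  groupCohomology (Rep.trivial ℤ (Crys q M hq) ℤ) k

end Crystal

/-- The holonomy matrix. -/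
def holM : Matrix (Fin 5) (Fin 5) ℤ := !![-1, 0, 0, 0, 0; 0, -1, 0, 0, 0; 0, 0, 0, 0, -1; 0, 0, 1, 0, 1; 0, 0, 0, -1, 1]

lemma holM_pow : holM ^ 4 = 1 := by decide

/-- `H^k(ℤ^5 ⋊ ℤ/4, ℤ)`, where the generator of `ℤ/4` acts on `ℤ^5` by left
multiplication by the matrix `holM`. -/
noncomputable abbrev H (k : ℕ) : ModuleCat ℤ := Crystal.cohCrys 4 holM holM_pow k

/-- `H^i(ℤ/4, H^j(ℤ^5, ℤ))`, with the functorially induced action on coefficients. -/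
noncomputable abbrev Hc (i j : ℕ) : ModuleCat ℤ := Crystal.cohOfCoh 4 holM holM_pow i j

/-
Two of the five coordinates span lines on which `ℤ/4` acts by `-1`, so `Γ` arises from
`ℤ^3 ⋊ ℤ/4` by two successive split extensions by an infinite cyclic group on which the quotient
acts through a sign. The cohomology of such an extension is computed by the fiber of `t - 1`, with
`t` the generator, between the cochains of the quotient with given and with sign-twisted
coefficients. On modules inflated from the quotient `t - 1` vanishes, so that
`H^n(Γ, ℤ) ≅ A^n ⊕ B^(n-1) ⊕ B^(n-1) ⊕ A^(n-2)`, where `A` and `B` are the cohomology of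
`ℤ^3 ⋊ ℤ/4` with coefficients in `ℤ` and in the sign module. Both are read off an explicit free
resolution that starts with the Fox calculus of a presentation and is periodic of period two from
degree three on. Each comparison with group cohomology is by dimension shifting, for which it is
enough to show that coinduced modules are acyclic.
-/

namespace CrystalCohomology

open CategoryTheory CategoryTheory.Limits

section Translation

variable {G V : Type*} [Group G] [AddCommGroup V]

lemma exists_forall_sub_eq (f : ℤ → V) : ∃ P : ℤ → V, ∀ i, P (i + 1) - P i = f i := by
  let P : ℤ → V
    | .ofNat n => ∑ j ∈ Finset.range n, f j
    | .negSucc n => -∑ j ∈ Finset.range (n + 1), f (.negSucc j)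
  refine ⟨P, fun i => ?_⟩
  match i with
  | .ofNat n => exact (Finset.sum_range_succ_sub_sum fun j : ℕ => f j)
  | .negSucc 0 =>
    change ∑ j ∈ Finset.range 0, f j - -∑ j ∈ Finset.range 1, f (.negSucc j) = f (.negSucc 0)
    simp
  | .negSucc (n + 1) =>
    change P (.negSucc n) - P (.negSucc (n + 1)) = f (.negSucc (n + 1))
    simp only [P, Finset.sum_range_succ _ (n + 1)]
    abel

lemma apply_mul_zpow {W : Type*} {f : G → W} {g : G} (hf : ∀ x, f (x * g) = f x) (x : G) (i : ℤ) :
    f (x * g ^ i) = f x := by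
  induction i with
  | zero => rw [zpow_zero, mul_one]
  | succ i ih => rw [_root_.zpow_add_one, ← mul_assoc, hf, ih]
  | pred i ih => rw [← hf, mul_assoc, ← _root_.zpow_add_one, sub_add_cancel, ih]

lemma exists_coset_coordinates (g : G) :
    ∃ (rep : G → G) (e : G → ℤ), ∀ x, rep x * g ^ e x = x ∧ rep (x * g) = rep x := by
  let rep (x : G) : G := (QuotientGroup.mk x : G ⧸ Subgroup.zpowers g).out
  have mem (x : G) : ∃ i : ℤ, g ^ i = (rep x)⁻¹ * x :=
    Subgroup.mem_zpowers_iff.1 (QuotientGroup.eq.1 (QuotientGroup.out_eq' _))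
  choose e he using mem
  refine ⟨rep, e, fun x => ⟨by rw [he, mul_inv_cancel_left], ?_⟩⟩
  exact congrArg Quotient.out (QuotientGroup.mk_mul_of_mem x (Subgroup.mem_zpowers g))

/- For `g` of infinite order `orderOf g = 0`, so the hypothesis on `F` is empty. -/
theorem exists_mul_right_sub_eq (g : G) (F : G → V)
    (hF : ∀ x, ∑ i ∈ Finset.range (orderOf g), F (x * g ^ i) = 0) :
    ∃ E : G → V, ∀ x, E (x * g) - E x = F x := by
  obtain ⟨rep, e, hrep⟩ := exists_coset_coordinates g
  choose P hP using fun y => exists_forall_sub_eq fun i => F (y * g ^ i)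
  have periodic (y : G) : Function.Periodic (P y) (orderOf g) := fun i => by
    rw [← sub_eq_zero, ← hF (y * g ^ i)]
    have := Finset.sum_range_sub (fun j : ℕ => P y (i + j)) (orderOf g)
    simp only [Nat.cast_add, Nat.cast_one, ← add_assoc, hP, Nat.cast_zero, add_zero] at this
    simp only [← this, _root_.zpow_add, zpow_natCast, mul_assoc]
  refine ⟨fun x => P (rep x) (e x), fun x => ?_⟩
  have index : (orderOf g : ℤ) ∣ e (x * g) - (e x + 1) := by
    rw [orderOf_dvd_iff_zpow_eq_one, _root_.zpow_sub, _root_.zpow_add_one, mul_inv_eq_one]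
    apply mul_left_cancel (a := rep x)
    rw [← mul_assoc, (hrep x).1, ← (hrep x).2, (hrep _).1]
  obtain ⟨c, hc⟩ := index
  have step : P (rep x) (e (x * g)) = P (rep x) (e x + 1) := by
    rw [← (periodic (rep x)).int_mul c (e x + 1), Int.cast_id, mul_comm c, ← hc, add_sub_cancel]
  simp only [(hrep x).2, step, hP, (hrep x).1]

theorem exists_sum_mul_right_eq (g : G) (hg : IsOfFinOrder g) (F : G → V)
    (hF : ∀ x, F (x * g) = F x) :
    ∃ E : G → V, ∀ x, ∑ i ∈ Finset.range (orderOf g), E (x * g ^ i) = F x := by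
  classical
  obtain ⟨rep, e, hrep⟩ := exists_coset_coordinates g
  have rep_pow (x : G) (i : ℕ) : rep (x * g ^ i) = rep x := by
    rw [← zpow_natCast, apply_mul_zpow fun x => (hrep x).2]
  have F_pow (x : G) (i : ℕ) : F (x * g ^ i) = F x := by
    rw [← zpow_natCast, apply_mul_zpow hF]
  refine ⟨fun x => if x = rep x then F x else 0, fun x => ?_⟩
  simp only [rep_pow, F_pow]
  have rep_mem : x⁻¹ * rep x ∈ Subgroup.zpowers g :=
    ⟨-e x, by
      simp only [_root_.zpow_neg, eq_inv_mul_iff_mul_eq, mul_inv_eq_iff_eq_mul, (hrep x).1]⟩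
  obtain ⟨i, hi, hix⟩ := Finset.mem_image.1 (hg.mem_zpowers_iff_mem_range_orderOf.1 rep_mem)
  rw [Finset.sum_eq_single_of_mem i hi, if_pos (by rw [hix, mul_inv_cancel_left])]
  intro j hj hji
  rw [if_neg fun h => hji (pow_injOn_Iio_orderOf (by simpa using hj) (by simpa using hi) ?_)]
  simp only [hix, ← h, inv_mul_cancel_left]

section Quotient

variable {p : G}

lemma exists_forall_mk_eq {W : Type*} {f : G → W} (hf : ∀ x, f (x * p) = f x) :
    ∃ F : G ⧸ Subgroup.zpowers p → W, ∀ x : G, F x = f x := by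
  refine ⟨Quotient.lift f fun a b hab => ?_, fun _ => rfl⟩
  obtain ⟨i, hi⟩ := Subgroup.mem_zpowers_iff.1 (QuotientGroup.leftRel_apply.1 hab)
  rw [← apply_mul_zpow hf a i, hi, mul_inv_cancel_left]

lemma comp_mk_mul_self {W : Type*} (E : G ⧸ Subgroup.zpowers p → W) (x : G) : E ↑(x * p) = E x :=
  congrArg E (QuotientGroup.mk_mul_of_mem x (Subgroup.mem_zpowers p))

variable [(Subgroup.zpowers p).Normal]

theorem exists_invariant_mul_right_sub_eq {g : G}
    (hg : orderOf (g : G ⧸ Subgroup.zpowers p) = 0) {f : G → V} (hf : ∀ x, f (x * p) = f x) :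
    ∃ e : G → V, (∀ x, e (x * p) = e x) ∧ ∀ x, e (x * g) - e x = f x := by
  obtain ⟨F, hF⟩ := exists_forall_mk_eq hf
  obtain ⟨E, hE⟩ := exists_mul_right_sub_eq (g : G ⧸ Subgroup.zpowers p) F (by simp [hg])
  exact ⟨fun x => E x, comp_mk_mul_self E, fun x => (hE x).trans (hF x)⟩

theorem exists_invariant_sum_mul_right_eq {g : G}
    (hg : IsOfFinOrder (g : G ⧸ Subgroup.zpowers p)) {f : G → V} (hp : ∀ x, f (x * p) = f x)
    (hf : ∀ x, f (x * g) = f x) :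
    ∃ e : G → V, (∀ x, e (x * p) = e x) ∧
      ∀ x, ∑ i ∈ Finset.range (orderOf (g : G ⧸ Subgroup.zpowers p)), e (x * g ^ i) = f x := by
  obtain ⟨F, hF⟩ := exists_forall_mk_eq hp
  obtain ⟨E, hE⟩ := exists_sum_mul_right_eq (g : G ⧸ Subgroup.zpowers p) hg F
    (Quotient.forall.2 fun x => (hF (x * g)).trans ((hf x).trans (hF x).symm))
  exact ⟨fun x => E x, comp_mk_mul_self E, fun x => (hE x).trans (hF x)⟩

end Quotient

end Translation

section Comparison

universe u

variable {k G : Type u} [CommRing k] [Group G]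

variable (k G) in
/-- The `G`-module of all functions `G → V`, with `(g • f) x = f (x * g)`: the module coinduced from
the trivial subgroup. -/
def translationRep (V : Type u) [AddCommGroup V] [Module k V] : Rep.{u} k G :=
  Rep.of (X := G → V)
    { toFun g := LinearMap.funLeft k V (· * g)
      map_one' := by ext f x; simp
      map_mul' g h := by ext f x; simp [mul_assoc] }

/-- The isomorphism identifying `translationRep` with Mathlib's coinduction from `⊥`. -/
def translationRepIso (V : Type u) [AddCommGroup V] [Module k V] :
    translationRep k G V ≅
      Rep.coind (⊥ : Subgroup G).subtype (Rep.trivial k (⊥ : Subgroup G) V) :=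
  Rep.mkIso
    { toFun f := ⟨f, fun s x => by simp [Subgroup.mem_bot.1 s.2]⟩
      invFun f := f.1
      map_add' _ _ := rfl
      map_smul' _ _ := rfl
      left_inv _ := rfl
      right_inv _ := rfl
      isIntertwining' _ := rfl }

lemma isZero_groupCohomology_translationRep (V : Type u) [AddCommGroup V] [Module k V] (n : ℕ) :
    IsZero (groupCohomology (translationRep k G V) (n + 1)) :=
  ((isZero_groupCohomology_succ_of_subsingleton _ n).of_iso (groupCohomology.coindIso _ _)).of_iso
    ((groupCohomology.functor k G (n + 1)).mapIso (translationRepIso V))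

/-- The embedding of a `G`-module into a coinduced one, sending `m` to its orbit map. -/
def orbitMap (M : Rep.{u} k G) : M ⟶ translationRep k G M.V :=
  Rep.ofHom
    { toFun m g := M.ρ g m
      map_add' a b := by ext g; simp
      map_smul' c a := by ext g; simp
      isIntertwining' g := by ext m x; simp }

instance mono_orbitMap (M : Rep.{u} k G) : Mono (orbitMap M) := by
  rw [Rep.mono_iff_injective]
  intro a b h
  have : M.ρ 1 a = M.ρ 1 b := congrFun h 1
  simpa using this

end Comparison

section DimensionShifting

universe v u

variable {k : Type u} [CommRing k] {C : Type v} [Category.{u} C] [Abelian C]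
  {F T : C ⥤ CochainComplex (ModuleCat.{u} k) ℕ} [F.PreservesZeroMorphisms]
  [T.PreservesZeroMorphisms]

/-- The degree `n` cohomology of a complex-valued functor. -/
noncomputable abbrev cohomologyFunctor (F : C ⥤ CochainComplex (ModuleCat.{u} k) ℕ) (n : ℕ) :
    C ⥤ ModuleCat.{u} k :=
  F ⋙ HomologicalComplex.homologyFunctor _ _ n

lemma nonempty_homology_one_iso_cokernel {S : ShortComplex C} (hS : (S.map F).ShortExact)
    (h₁ : IsZero ((F.obj S.X₂).homology 1)) :
    Nonempty ((F.obj S.X₁).homology 1 ≅ cokernel ((cohomologyFunctor F 0).map S.g)) := by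
  have : Epi (hS.δ 0 1 rfl) := hS.epi_δ _ _ _ h₁
  exact ⟨(hS.homology_exact₃ 0 1 rfl).gIsCokernel.coconePointUniqueUpToIso (colimit.isColimit _)⟩

lemma nonempty_homology_succ_iso {S : ShortComplex C} (hS : (S.map F).ShortExact) (n : ℕ)
    (h₁ : IsZero ((F.obj S.X₂).homology n)) (h₂ : IsZero ((F.obj S.X₂).homology (n + 1))) :
    Nonempty ((F.obj S.X₃).homology n ≅ (F.obj S.X₁).homology (n + 1)) := by
  have : IsIso (hS.δ n (n + 1) rfl) := hS.isIso_δ _ _ _ h₁ h₂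
  exact ⟨@asIso _ _ _ _ (hS.δ n (n + 1) rfl) this⟩

theorem nonempty_homology_iso_of_effaceable
    (exact_F : ∀ S : ShortComplex C, S.ShortExact → (S.map F).ShortExact)
    (exact_T : ∀ S : ShortComplex C, S.ShortExact → (S.map T).ShortExact)
    (effaceable : ∀ M : C, ∃ (I : C) (f : M ⟶ I), Mono f ∧ ∀ n,
      IsZero ((F.obj I).homology (n + 1)) ∧ IsZero ((T.obj I).homology (n + 1)))
    (e : cohomologyFunctor F 0 ≅ cohomologyFunctor T 0) (n : ℕ) (M : C) :
    Nonempty ((F.obj M).homology n ≅ (T.obj M).homology n) := by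
  induction n generalizing M with
  | zero => exact ⟨e.app M⟩
  | succ n ih =>
    obtain ⟨I, f, _, acyclic⟩ := effaceable M
    have hS : (ShortComplex.mk f (cokernel.π f) (cokernel.condition f)).ShortExact :=
      { exact := ShortComplex.exact_cokernel f }
    cases n with
    | zero =>
      obtain ⟨a⟩ := nonempty_homology_one_iso_cokernel (exact_F _ hS) (acyclic 0).1
      obtain ⟨b⟩ := nonempty_homology_one_iso_cokernel (exact_T _ hS) (acyclic 0).2
      exact ⟨a ≪≫ cokernel.mapIso _ _ (e.app _) (e.app _) (e.hom.naturality _) ≪≫ b.symm⟩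
    | succ n =>
      obtain ⟨a⟩ := nonempty_homology_succ_iso (exact_F _ hS) _ (acyclic n).1 (acyclic (n + 1)).1
      obtain ⟨b⟩ := nonempty_homology_succ_iso (exact_T _ hS) _ (acyclic n).2 (acyclic (n + 1)).2
      obtain ⟨c⟩ := ih (cokernel f)
      exact ⟨a.symm ≪≫ c ≪≫ b⟩

end DimensionShifting

section GroupCohomology

universe u

variable {k G : Type u} [CommRing k] [Group G]
  {T : Rep.{u} k G ⥤ CochainComplex (ModuleCat.{u} k) ℕ}
  (ι : ∀ M, (Rep.invariantsFunctor k G).obj M ⟶ (T.obj M).X 0)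
  (ι_d : ∀ M, ι M ≫ (T.obj M).d 0 1 = 0)

/-- The map `M^G ⟶ Z⁰(T M)` induced by a map to degree `0` killed by the differential. -/
noncomputable abbrev invariantsToCycles (M : Rep.{u} k G) :
    (Rep.invariantsFunctor k G).obj M ⟶ (T.obj M).cycles 0 :=
  (T.obj M).liftCycles (ι M) 1 (CochainComplex.next ℕ 0) (ι_d M)

lemma isIso_invariantsToCycles (M : Rep.{u} k G) (inj : Function.Injective (ι M))
    (surj : ∀ x, (T.obj M).d 0 1 x = 0 → ∃ m, ι M m = x) :
    IsIso (invariantsToCycles ι ι_d M) := by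
  have lift_i : invariantsToCycles ι ι_d M ≫ (T.obj M).iCycles 0 = ι M :=
    HomologicalComplex.liftCycles_i ..
  have lift_i_apply (m) : (T.obj M).iCycles 0 (invariantsToCycles ι ι_d M m) = ι M m := by
    rw [← lift_i]; rfl
  rw [ConcreteCategory.isIso_iff_bijective]
  refine ⟨fun a b hab => inj ?_, fun z => ?_⟩
  · rw [← lift_i_apply, hab, lift_i_apply]
  · obtain ⟨m, hm⟩ := surj ((T.obj M).iCycles 0 z)
      (LinearMap.congr_fun (congrArg ModuleCat.Hom.hom ((T.obj M).iCycles_d 0 1)) z)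
    exact ⟨m, (ModuleCat.mono_iff_injective _).1 inferInstance ((lift_i_apply m).trans hm)⟩

lemma invariantsToCycles_naturality
    (ι_naturality : ∀ {M N} (f : M ⟶ N),
      (Rep.invariantsFunctor k G).map f ≫ ι N = ι M ≫ (T.map f).f 0)
    {M N : Rep.{u} k G} (f : M ⟶ N) :
    (Rep.invariantsFunctor k G).map f ≫ invariantsToCycles ι ι_d N =
      invariantsToCycles ι ι_d M ≫ HomologicalComplex.cyclesMap (T.map f) 0 := by
  rw [← cancel_mono ((T.obj N).iCycles 0)]
  simpa using ι_naturality f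

/-- The natural isomorphism `M^G ≅ H⁰(T M)` when `M^G ⟶ Z⁰(T M)` is an isomorphism. -/
noncomputable def invariantsIsoDegreeZero
    (ι_naturality : ∀ {M N} (f : M ⟶ N),
      (Rep.invariantsFunctor k G).map f ≫ ι N = ι M ≫ (T.map f).f 0)
    (h : ∀ M, IsIso (invariantsToCycles ι ι_d M)) :
    Rep.invariantsFunctor k G ≅ cohomologyFunctor T 0 :=
  NatIso.ofComponents
    (fun M => asIso (invariantsToCycles ι ι_d M) ≪≫ CochainComplex.isoHomologyπ₀ (T.obj M))
    fun {M N} f => by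
      change _ ≫ invariantsToCycles ι ι_d N ≫ (T.obj N).homologyπ 0 =
        (invariantsToCycles ι ι_d M ≫ (T.obj M).homologyπ 0) ≫
          HomologicalComplex.homologyMap (T.map f) 0
      rw [Category.assoc, HomologicalComplex.homologyπ_naturality, ← Category.assoc,
        invariantsToCycles_naturality ι ι_d ι_naturality, Category.assoc]

variable (k G) in
/-- The natural isomorphism `H⁰(G, M) ≅ M^G`. -/
noncomputable def cochainsDegreeZeroIso :
    cohomologyFunctor (groupCohomology.cochainsFunctor k G) 0 ≅ Rep.invariantsFunctor k G :=
  NatIso.ofComponents groupCohomology.H0Iso groupCohomology.map_id_comp_H0Iso_hom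

theorem nonempty_groupCohomology_iso [T.PreservesZeroMorphisms]
    (exact_T : ∀ S : ShortComplex (Rep.{u} k G), S.ShortExact → (S.map T).ShortExact)
    (acyclic : ∀ (V : Type u) [AddCommGroup V] [Module k V] (n : ℕ),
      IsZero ((T.obj (translationRep k G V)).homology (n + 1)))
    (ι_naturality : ∀ {M N} (f : M ⟶ N),
      (Rep.invariantsFunctor k G).map f ≫ ι N = ι M ≫ (T.map f).f 0)
    (inj : ∀ M, Function.Injective (ι M))
    (exact_zero : ∀ M x, (T.obj M).d 0 1 x = 0 ↔ ∃ m, ι M m = x) (M : Rep.{u} k G) (n : ℕ) :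
    Nonempty (groupCohomology M n ≅ (T.obj M).homology n) := by
  have ι_d (M) : ι M ≫ (T.obj M).d 0 1 = 0 := by
    ext m
    exact (exact_zero M _).2 ⟨m, rfl⟩
  refine nonempty_homology_iso_of_effaceable (F := groupCohomology.cochainsFunctor k G)
    (fun S hS => groupCohomology.map_cochainsFunctor_shortExact hS) exact_T
    (fun M => ⟨_, orbitMap M, inferInstance, fun n =>
      ⟨isZero_groupCohomology_translationRep M.V n, acyclic M.V n⟩⟩)
    (cochainsDegreeZeroIso k G ≪≫ invariantsIsoDegreeZero ι ι_d ι_naturality fun M => ?_) n M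
  exact isIso_invariantsToCycles ι ι_d M (inj M) fun x => (exact_zero M x).1

end GroupCohomology

section ModuleHomology

universe u

variable {k : Type u} [CommRing k]

lemma shortExact_moduleCat_iff {S : ShortComplex (ModuleCat.{u} k)} :
    S.ShortExact ↔ Function.Injective S.f ∧ (∀ x, S.g x = 0 → ∃ y, S.f y = x) ∧
      Function.Surjective S.g :=
  ⟨fun h => ⟨(ModuleCat.mono_iff_injective _).1 h.mono_f, S.moduleCat_exact_iff.1 h.exact,
      (ModuleCat.epi_iff_surjective _).1 h.epi_g⟩,
    fun ⟨inj, exact, surj⟩ =>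
      { exact := S.moduleCat_exact_iff.2 exact
        mono_f := (ModuleCat.mono_iff_injective _).2 inj
        epi_g := (ModuleCat.epi_iff_surjective _).2 surj }⟩

variable (C : CochainComplex (ModuleCat.{u} k) ℕ)

lemma d_d_apply (i : ℕ) (x : C.X i) : C.d (i + 1) (i + 2) (C.d i (i + 1) x) = 0 :=
  LinearMap.congr_fun (congrArg ModuleCat.Hom.hom (C.d_comp_d i (i + 1) (i + 2))) x

variable {C} in
lemma d_hom_apply {D : CochainComplex (ModuleCat.{u} k) ℕ} (f : C ⟶ D) (i : ℕ) (x : C.X i) :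
    D.d i (i + 1) (f.f i x) = f.f (i + 1) (C.d i (i + 1) x) :=
  LinearMap.congr_fun (congrArg ModuleCat.Hom.hom (f.comm i (i + 1))) x

lemma isZero_homology_succ_iff {n : ℕ} : IsZero (C.homology (n + 1)) ↔
    ∀ x, C.d (n + 1) (n + 2) x = 0 → ∃ y, C.d n (n + 1) y = x := by
  rw [← HomologicalComplex.exactAt_iff_isZero_homology,
    HomologicalComplex.exactAt_iff' C n (n + 1) (n + 2) (by simp) (by simp),
    ShortComplex.moduleCat_exact_iff]
  rfl

lemma exists_homologyClass {i n : ℕ} (hi : (ComplexShape.up ℕ).prev n = i) :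
    ∃ π : LinearMap.ker (C.d n (n + 1)).hom →ₗ[k] C.homology n, Function.Surjective π ∧
      ∀ x, π x = 0 ↔ ∃ y, C.d i n y = x := by
  let e := (C.homologyIsoSc' i n (n + 1) hi (by simp) ≪≫
    ShortComplex.moduleCatHomologyIso _).toLinearEquiv
  refine ⟨e.symm.toLinearMap ∘ₗ Submodule.mkQ _,
    e.symm.surjective.comp (Submodule.mkQ_surjective _), fun x => ?_⟩
  refine (map_eq_zero_iff e.symm e.symm.injective).trans
    ((Submodule.Quotient.mk_eq_zero _).trans ?_)
  exact exists_congr fun y => Subtype.ext_iff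

theorem nonempty_homology_addEquiv {i n : ℕ} (hi : (ComplexShape.up ℕ).prev n = i)
    {Q : Type*} [AddCommGroup Q]
    (φ : LinearMap.ker (C.d n (n + 1)).hom →+ Q) (surj : Function.Surjective φ)
    (ker : ∀ x, φ x = 0 ↔ ∃ y, C.d i n y = x) :
    Nonempty (C.homology n ≃+ Q) := by
  obtain ⟨π, π_surj, π_ker⟩ := exists_homologyClass C hi
  have same_ker : π.toAddMonoidHom.ker = φ.ker := by
    ext x
    exact (π_ker x).trans (ker x).symm
  exact ⟨(QuotientAddGroup.quotientKerEquivOfSurjective π.toAddMonoidHom π_surj).symm.trans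
    ((QuotientAddGroup.quotientAddEquivOfEq same_ker).trans
      (QuotientAddGroup.quotientKerEquivOfSurjective φ surj))⟩

end ModuleHomology

section Fiber

universe u

variable {k : Type u} [CommRing k] {K L : CochainComplex (ModuleCat.{u} k) ℕ} (φ : K ⟶ L)

/-- The terms of the homotopy fiber of a map `K ⟶ L` of cochain complexes. -/
abbrev fiberX (K L : CochainComplex (ModuleCat.{u} k) ℕ) : ℕ → ModuleCat.{u} k
  | 0 => K.X 0
  | n + 1 => ModuleCat.of k (K.X (n + 1) × L.X n)

/-- The differential of the homotopy fiber, `(x, y) ↦ (d x, φ x - d y)`. -/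
abbrev fiberD : ∀ n, fiberX K L n ⟶ fiberX K L (n + 1)
  | 0 => ModuleCat.ofHom ((K.d 0 1).hom.prod (φ.f 0).hom)
  | n + 1 => ModuleCat.ofHom (((K.d (n + 1) (n + 2)).hom ∘ₗ LinearMap.fst k _ _).prod
      ((φ.f (n + 1)).hom ∘ₗ LinearMap.fst k _ _ - (L.d n (n + 1)).hom ∘ₗ LinearMap.snd k _ _))

/-- The homotopy fiber of a map of cochain complexes of modules, that is, its mapping cone shifted
so as to start with `K` in degree `0`. -/
def fiber : CochainComplex (ModuleCat.{u} k) ℕ :=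
  CochainComplex.of (fiberX K L) (fiberD φ) (by
    rintro (_ | n)
    · ext1
      apply LinearMap.ext
      intro x
      exact Prod.ext (d_d_apply K 0 x) (sub_eq_zero.2 (d_hom_apply φ 0 x).symm)
    · ext1
      apply LinearMap.ext
      rintro ⟨x, y⟩
      refine Prod.ext (d_d_apply K _ x) ?_
      change φ.f _ (K.d _ _ x) - L.d _ _ (φ.f _ x - L.d _ _ y) = 0
      rw [map_sub, d_d_apply, d_hom_apply, sub_zero, sub_self])

lemma fiber_d_zero_apply (x : K.X 0) : (fiber φ).d 0 1 x = (K.d 0 1 x, φ.f 0 x) :=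
  congrArg (fun f : fiberX K L 0 ⟶ fiberX K L 1 => f x)
    (CochainComplex.of_d (fiberX K L) (fiberD φ) (j := 0))

lemma fiber_d_succ_apply (n : ℕ) (x : K.X (n + 1)) (y : L.X n) :
    (fiber φ).d (n + 1) (n + 2) (x, y) =
      (K.d (n + 1) (n + 2) x, φ.f (n + 1) x - L.d n (n + 1) y) :=
  congrArg (fun f : fiberX K L (n + 1) ⟶ fiberX K L (n + 2) => f (x, y))
    (CochainComplex.of_d (fiberX K L) (fiberD φ) (j := n + 1))

/-- The map of homotopy fibers induced by a commutative square of complexes. -/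
def fiberMap {K' L' : CochainComplex (ModuleCat.{u} k) ℕ} {φ : K ⟶ L} {φ' : K' ⟶ L'}
    (a : K ⟶ K') (b : L ⟶ L') (comm : a ≫ φ' = φ ≫ b) : fiber φ ⟶ fiber φ' where
  f
    | 0 => a.f 0
    | n + 1 => ModuleCat.ofHom ((a.f (n + 1)).hom.prodMap (b.f n).hom)
  comm' i j hij := by
    have square (n : ℕ) (x : K.X n) : φ'.f n (a.f n x) = b.f n (φ.f n x) :=
      LinearMap.congr_fun (congrArg (fun f => (f.f n).hom) comm) x
    obtain rfl : i + 1 = j := hij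
    ext1
    apply LinearMap.ext
    cases i with
    | zero =>
      intro x
      refine (fiber_d_zero_apply φ' _).trans ?_
      refine .trans ?_ (congrArg ((a.f 1).hom.prodMap (b.f 0).hom) (fiber_d_zero_apply φ x)).symm
      exact Prod.ext (d_hom_apply a 0 x) (square 0 x)
    | succ n =>
      rintro ⟨x, y⟩
      refine (fiber_d_succ_apply φ' n _ _).trans ?_
      refine .trans ?_
        (congrArg ((a.f (n + 2)).hom.prodMap (b.f (n + 1)).hom) (fiber_d_succ_apply φ n x y)).symm
      refine Prod.ext (d_hom_apply a _ x) ?_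
      change φ'.f _ (a.f _ x) - L'.d _ _ (b.f _ y) = b.f _ (φ.f _ x - L.d _ _ y)
      rw [map_sub, square, d_hom_apply b]

lemma isZero_homology_fiber {J : CochainComplex (ModuleCat.{u} k) ℕ} {f : J ⟶ K} {g : K ⟶ L}
    (inj : ∀ i, Function.Injective (f.f i)) (exact : ∀ i x, g.f i x = 0 ↔ ∃ y, f.f i y = x)
    (surj : ∀ i, Function.Surjective (g.f i)) (n : ℕ) (h : IsZero (J.homology (n + 1))) :
    IsZero ((fiber g).homology (n + 1)) := by
  refine (isZero_homology_succ_iff _).2 ?_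
  rintro ⟨x, y⟩ hxy
  obtain ⟨y', rfl⟩ := surj n y
  rw [fiber_d_succ_apply] at hxy
  have dx : K.d _ _ x = 0 := congrArg Prod.fst hxy
  have dy : g.f _ x - L.d _ _ (g.f n y') = 0 := congrArg Prod.snd hxy
  obtain ⟨z, hz⟩ := (exact (n + 1) (x - K.d n (n + 1) y')).1 (by
    rw [map_sub, ← d_hom_apply, dy])
  obtain ⟨w, rfl⟩ := (isZero_homology_succ_iff _).1 h z (inj _ (by
    rw [← d_hom_apply, hz, map_sub, dx, d_d_apply, sub_zero, map_zero]))
  rw [← d_hom_apply] at hz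
  have hx : K.d n (n + 1) (f.f n w + y') = x := by rw [map_add, hz, sub_add_cancel]
  have hy : g.f n (f.f n w + y') = g.f n y' := by
    rw [map_add, (exact n _).2 ⟨w, rfl⟩, zero_add]
  cases n with
  | zero => exact ⟨f.f 0 w + y', (fiber_d_zero_apply g _).trans (Prod.ext hx hy)⟩
  | succ n => exact ⟨(f.f _ w + y', 0), (fiber_d_succ_apply g n _ _).trans
      (Prod.ext hx (by rw [map_zero, sub_zero]; exact hy))⟩

lemma exists_d_fiber_zero_eq_iff (n : ℕ) (x : K.X (n + 1)) (y : L.X n) :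
    (∃ z, (fiber (0 : K ⟶ L)).d n (n + 1) z = (x, y)) ↔
      (∃ a, K.d n (n + 1) a = x) ∧ ∃ b, L.d ((ComplexShape.up ℕ).prev n) n b = y := by
  cases n with
  | zero =>
    rw [L.shape _ 0 (by simp)]
    constructor
    · rintro ⟨a, ha⟩
      obtain ⟨ha, hb⟩ := Prod.ext_iff.1 ((fiber_d_zero_apply (0 : K ⟶ L) a).symm.trans ha)
      exact ⟨⟨a, ha⟩, 0, hb⟩
    · rintro ⟨⟨a, ha⟩, _, hb⟩
      exact ⟨a, (fiber_d_zero_apply _ a).trans (Prod.ext ha hb)⟩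
  | succ n =>
    rw [CochainComplex.prev_nat_succ]
    constructor
    · rintro ⟨⟨a, b⟩, hab⟩
      obtain ⟨ha, hb⟩ := Prod.ext_iff.1 ((fiber_d_succ_apply (0 : K ⟶ L) n a b).symm.trans hab)
      exact ⟨⟨a, ha⟩, -b, (map_neg _ _).trans ((zero_sub _).symm.trans hb)⟩
    · rintro ⟨⟨a, ha⟩, b, hb⟩
      refine ⟨(a, -b), (fiber_d_succ_apply _ n a (-b)).trans (Prod.ext ha ?_)⟩
      rw [map_neg, sub_neg_eq_add]
      exact (zero_add _).trans hb

lemma nonempty_homology_zero_fiber_zero :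
    Nonempty ((fiber (0 : K ⟶ L)).homology 0 ≃+ K.homology 0) := by
  obtain ⟨π, π_surj, π_ker⟩ := exists_homologyClass K (i := 0) (n := 0) (by simp)
  have mem_ker (x : LinearMap.ker ((fiber (0 : K ⟶ L)).d 0 1).hom) : K.d 0 1 x.1 = 0 :=
    congrArg Prod.fst ((fiber_d_zero_apply (0 : K ⟶ L) x.1).symm.trans x.2)
  refine nonempty_homology_addEquiv _ (i := 0) (by simp)
    { toFun x := π ⟨x.1, mem_ker x⟩
      map_zero' := map_zero π
      map_add' x y := map_add π ⟨x.1, mem_ker x⟩ ⟨y.1, mem_ker y⟩ } (fun q => ?_) fun x => ?_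
  · obtain ⟨x, rfl⟩ := π_surj q
    exact ⟨⟨x.1, (fiber_d_zero_apply _ _).trans (Prod.ext x.2 rfl)⟩, rfl⟩
  · refine (π_ker _).trans ?_
    rw [K.shape 0 0 (by simp), (fiber (0 : K ⟶ L)).shape 0 0 (by simp)]
    rfl

theorem nonempty_homology_succ_fiber_zero (n : ℕ) :
    Nonempty ((fiber (0 : K ⟶ L)).homology (n + 1) ≃+ K.homology (n + 1) × L.homology n) := by
  obtain ⟨π, π_surj, π_ker⟩ := exists_homologyClass K (i := n) (n := n + 1) (by simp)
  obtain ⟨π', π'_surj, π'_ker⟩ := exists_homologyClass L (n := n) rfl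
  have mem_ker (x : LinearMap.ker ((fiber (0 : K ⟶ L)).d (n + 1) (n + 2)).hom) :
      K.d (n + 1) (n + 2) x.1.1 = 0 ∧ L.d n (n + 1) x.1.2 = 0 := by
    have h := (fiber_d_succ_apply (0 : K ⟶ L) n x.1.1 x.1.2).symm.trans x.2
    exact ⟨congrArg Prod.fst h, neg_eq_zero.1 ((zero_sub _).symm.trans (congrArg Prod.snd h))⟩
  refine nonempty_homology_addEquiv _ (i := n) (by simp)
    { toFun x := (π ⟨x.1.1, (mem_ker x).1⟩, π' ⟨x.1.2, (mem_ker x).2⟩)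
      map_zero' := Prod.ext (map_zero π) (map_zero π')
      map_add' x y := Prod.ext (map_add π ⟨x.1.1, (mem_ker x).1⟩ ⟨y.1.1, (mem_ker y).1⟩)
        (map_add π' ⟨x.1.2, (mem_ker x).2⟩ ⟨y.1.2, (mem_ker y).2⟩) } ?_ fun x => ?_
  · rintro ⟨q, q'⟩
    obtain ⟨x, rfl⟩ := π_surj q
    obtain ⟨y, rfl⟩ := π'_surj q'
    exact ⟨⟨(x.1, y.1), (fiber_d_succ_apply _ _ _ _).trans
      (Prod.ext x.2 ((zero_sub _).trans (neg_eq_zero.2 y.2)))⟩, rfl⟩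
  · refine Prod.ext_iff.trans ((and_congr (π_ker _) (π'_ker _)).trans ?_)
    exact (exists_d_fiber_zero_eq_iff n x.1.1 x.1.2).symm

section Functor

universe v

variable {C : Type v} [Category.{u} C] {A B : C ⥤ CochainComplex (ModuleCat.{u} k) ℕ}

/-- The objectwise homotopy fiber of a natural transformation between complex-valued functors. -/
def fiberFunctor (α : A ⟶ B) : C ⥤ CochainComplex (ModuleCat.{u} k) ℕ where
  obj M := fiber (α.app M)
  map f := fiberMap (A.map f) (B.map f) (α.naturality f)
  map_id M := by
    ext (_ | n) x
    · exact congrArg (fun φ : A.obj M ⟶ A.obj M => φ.f 0 x) (A.map_id M)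
    · exact Prod.ext (congrArg (fun φ : A.obj M ⟶ A.obj M => φ.f (n + 1) x.1) (A.map_id M))
        (congrArg (fun φ : B.obj M ⟶ B.obj M => φ.f n x.2) (B.map_id M))
  map_comp {M N P} f g := by
    ext (_ | n) x
    · exact congrArg (fun φ : A.obj M ⟶ A.obj P => φ.f 0 x) (A.map_comp f g)
    · exact Prod.ext (congrArg (fun φ : A.obj M ⟶ A.obj P => φ.f (n + 1) x.1) (A.map_comp f g))
        (congrArg (fun φ : B.obj M ⟶ B.obj P => φ.f n x.2) (B.map_comp f g))

variable [HasZeroMorphisms C]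

instance preservesZeroMorphisms_fiberFunctor [A.PreservesZeroMorphisms] [B.PreservesZeroMorphisms]
    (α : A ⟶ B) : (fiberFunctor α).PreservesZeroMorphisms where
  map_zero M N := by
    ext (_ | n) x
    · exact congrArg (fun φ : A.obj M ⟶ A.obj N => φ.f 0 x) (A.map_zero M N)
    · exact Prod.ext (congrArg (fun φ : A.obj M ⟶ A.obj N => φ.f (n + 1) x.1) (A.map_zero M N))
        (congrArg (fun φ : B.obj M ⟶ B.obj N => φ.f n x.2) (B.map_zero M N))

lemma shortExact_map_fiberFunctor [A.PreservesZeroMorphisms] [B.PreservesZeroMorphisms]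
    (α : A ⟶ B) {S : ShortComplex C} (hA : (S.map A).ShortExact) (hB : (S.map B).ShortExact) :
    (S.map (fiberFunctor α)).ShortExact := by
  have hA' (i : ℕ) := shortExact_moduleCat_iff.1
    (hA.map_of_exact (HomologicalComplex.eval (ModuleCat.{u} k) (ComplexShape.up ℕ) i))
  have hB' (i : ℕ) := shortExact_moduleCat_iff.1
    (hB.map_of_exact (HomologicalComplex.eval (ModuleCat.{u} k) (ComplexShape.up ℕ) i))
  refine HomologicalComplex.shortExact_of_degreewise_shortExact _ fun i =>
    shortExact_moduleCat_iff.2 ?_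
  cases i with
  | zero => exact hA' 0
  | succ n =>
    refine ⟨(hA' (n + 1)).1.prodMap (hB' n).1, ?_, (hA' (n + 1)).2.2.prodMap (hB' n).2.2⟩
    rintro ⟨x, y⟩ hxy
    obtain ⟨x', hx⟩ := (hA' (n + 1)).2.1 x (congrArg Prod.fst hxy)
    obtain ⟨y', hy⟩ := (hB' n).2.1 y (congrArg Prod.snd hxy)
    exact ⟨(x', y'), Prod.ext hx hy⟩

end Functor

end Fiber

section RepExact

universe u

variable {k G : Type u} [CommRing k] [Group G]

lemma shortExact_rep_iff {S : ShortComplex (Rep.{u} k G)} :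
    S.ShortExact ↔ Function.Injective S.f ∧ (∀ x, S.g x = 0 → ∃ y, S.f y = x) ∧
      Function.Surjective S.g := by
  have exact_iff : S.Exact ↔ ∀ x, S.g x = 0 → ∃ y, S.f y = x := by
    rw [← ShortComplex.exact_map_iff_of_faithful S (forget₂ (Rep.{u} k G) (ModuleCat.{u} k)),
      ShortComplex.moduleCat_exact_iff]
    rfl
  exact ⟨fun h => ⟨(Rep.mono_iff_injective _).1 h.mono_f, exact_iff.1 h.exact,
      (Rep.epi_iff_surjective _).1 h.epi_g⟩,
    fun ⟨inj, exact, surj⟩ =>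
      { exact := exact_iff.2 exact
        mono_f := (Rep.mono_iff_injective _).2 inj
        epi_g := (Rep.epi_iff_surjective _).2 surj }⟩

end RepExact

section SignTwist

universe u

variable {k G : Type u} [CommRing k] [Group G] (χ : G →* ℤˣ)

/-- The functor `M ↦ M ⊗ ℤ_χ` twisting the action on a representation by a sign character `χ`. -/
def signTwist : Rep.{u} k G ⥤ Rep.{u} k G where
  obj M := Rep.of
    { toFun g := (χ g : ℤ) • M.ρ g
      map_one' := by simp
      map_mul' g h := by rw [map_mul, map_mul, Units.val_mul, smul_mul_smul_comm] }
  map f := Rep.ofHom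
    { f.hom with
      isIntertwining' g := by
        ext m
        change f.hom ((χ g : ℤ) • _) = (χ g : ℤ) • _
        rw [map_zsmul]
        exact congrArg _ (Rep.hom_comm_apply f g m) }

instance : (signTwist (k := k) χ).PreservesZeroMorphisms where

lemma shortExact_map_signTwist {S : ShortComplex (Rep.{u} k G)} (hS : S.ShortExact) :
    (S.map (signTwist χ)).ShortExact := by
  obtain ⟨inj, exact, surj⟩ := shortExact_rep_iff.1 hS
  exact shortExact_rep_iff.2 ⟨inj, exact, surj⟩

end SignTwist

section Gysin

universe u

variable {k G : Type u} [CommRing k] [Group G] (χ : G →* ℤˣ)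

/-- The action of `G` on the infinite cyclic group through a sign character. -/
abbrev signAction : G →* MulAut (Multiplicative ℤ) :=
  (MulAutMultiplicative ℤ).symm.toMonoidHom.comp ((DistribMulAction.toAddAut ℤˣ ℤ).comp χ)

/-- The extension of `G` by an infinite cyclic group on which it acts through a sign character. -/
abbrev SignExtension : Type u := Multiplicative ℤ ⋊[signAction χ] G

/-- The generator of the infinite cyclic normal subgroup. -/
abbrev signGenerator : SignExtension χ := SemidirectProduct.inl (Multiplicative.ofAdd 1)

/-- The complement of the cyclic normal subgroup obtained by translating by `1` the elements of `G`
on which `χ` is `-1`. -/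
def shiftedSection : G →* SignExtension χ where
  toFun g := ⟨Multiplicative.ofAdd ((1 - (χ g : ℤ)) / 2), g⟩
  map_one' := by ext <;> simp
  map_mul' g h := by
    ext
    · apply Multiplicative.toAdd.injective
      change (1 - ((χ (g * h) : ℤˣ) : ℤ)) / 2 = (1 - (χ g : ℤ)) / 2 + χ g * ((1 - (χ h : ℤ)) / 2)
      rw [map_mul]
      rcases Int.units_eq_one_or (χ g) with hg | hg <;>
        rcases Int.units_eq_one_or (χ h) with hh | hh <;> simp [hg, hh]
    · rfl

lemma shiftedSection_cases (g : G) :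
    (χ g = 1 ∧ shiftedSection χ g = SemidirectProduct.inr g ∧
      signGenerator χ * SemidirectProduct.inr g = SemidirectProduct.inr g * signGenerator χ) ∨
    (χ g = -1 ∧ shiftedSection χ g = signGenerator χ * SemidirectProduct.inr g ∧
      shiftedSection χ g * signGenerator χ = SemidirectProduct.inr g) := by
  rcases Int.units_eq_one_or (χ g) with h | h
  · refine .inl ⟨h, ?_, ?_⟩ <;> ext <;> simp [shiftedSection, h]
  · refine .inr ⟨h, ?_, ?_⟩ <;> ext <;> simp [shiftedSection, h]

open SemidirectProduct in
/-- The natural map `t - 1 : M ⟶ M ⊗ ℤ_χ` of representations of `G`, where `t` is the generator of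
the cyclic normal subgroup. It is equivariant if `G` acts on its source through the standard section
and on its target through the shifted one. -/
def generatorSubOne : Rep.resFunctor (k := k) (inr : G →* SignExtension χ) ⟶
    Rep.resFunctor (shiftedSection χ) ⋙ signTwist χ where
  app M := Rep.ofHom
    { M.ρ (signGenerator χ) - 1 with
      isIntertwining' g := by
        ext m
        change M.ρ (signGenerator χ) (M.ρ (inr g) m) - M.ρ (inr g) m =
          (χ g : ℤ) • M.ρ (shiftedSection χ g) (M.ρ (signGenerator χ) m - m)
        simp only [map_sub, ← Module.End.mul_apply, ← map_mul]
        rcases shiftedSection_cases χ g with ⟨hχ, hs, comm⟩ | ⟨hχ, hs, comm⟩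
        · rw [hχ, hs, comm, Units.val_one, one_smul]
        · rw [hχ, comm, hs, Units.val_neg, Units.val_one, neg_one_smul, neg_sub] }
  naturality M N f := by
    ext m
    change N.ρ (signGenerator χ) (f.hom m) - f.hom m = f.hom (M.ρ (signGenerator χ) m - m)
    rw [map_sub]
    exact congrArg (· - _) (Rep.hom_comm_apply f _ m).symm

/-- The homotopy fiber of `t - 1` on cochains of `G`, a complex computing the cohomology of the
extension of `G` by the cyclic group generated by `t`. -/
noncomputable def gysinFunctor : Rep.{u} k (SignExtension χ) ⥤ CochainComplex (ModuleCat.{u} k) ℕ :=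
  fiberFunctor (Functor.whiskerRight (generatorSubOne χ) (groupCohomology.cochainsFunctor k G))

instance : (gysinFunctor (k := k) χ).PreservesZeroMorphisms :=
  inferInstanceAs (fiberFunctor _).PreservesZeroMorphisms

lemma shortExact_map_gysinFunctor {S : ShortComplex (Rep.{u} k (SignExtension χ))}
    (hS : S.ShortExact) : (S.map (gysinFunctor χ)).ShortExact :=
  shortExact_map_fiberFunctor _
    (groupCohomology.map_cochainsFunctor_shortExact ((Rep.shortExact_res _).2 hS))
    (groupCohomology.map_cochainsFunctor_shortExact
      (shortExact_map_signTwist χ ((Rep.shortExact_res _).2 hS)))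

lemma orderOf_signGenerator : orderOf (signGenerator χ) = 0 := by
  rw [orderOf_injective _ SemidirectProduct.inl_injective, orderOf_eq_zero_iff,
    isOfFinOrder_ofAdd_iff]
  exact not_isOfFinAddOrder_of_isAddTorsionFree one_ne_zero

lemma eq_inr_right_mul_zpow (x : SignExtension χ) :
    ∃ i : ℤ, x = SemidirectProduct.inr x.right * signGenerator χ ^ i := by
  refine ⟨χ x.right * x.left.toAdd, ?_⟩
  rw [← map_zpow, ← ofAdd_zsmul]
  ext
  · apply Multiplicative.toAdd.injective
    change x.left.toAdd = 0 + χ x.right * ((χ x.right * x.left.toAdd) • 1)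
    rw [smul_eq_mul, mul_one, ← mul_assoc, ← Units.val_mul, Int.units_mul_self, Units.val_one,
      one_mul, zero_add]
  · change x.right = x.right * 1
    rw [mul_one]

lemma apply_inr_right {V : Type*} {f : SignExtension χ → V}
    (hf : ∀ x, f (x * signGenerator χ) = f x) (x : SignExtension χ) :
    f (SemidirectProduct.inr x.right) = f x := by
  obtain ⟨i, hi⟩ := eq_inr_right_mul_zpow χ x
  exact (apply_mul_zpow hf _ i).symm.trans (congrArg f hi.symm)

open SemidirectProduct in
/-- Functions on `G`, seen as functions on the extension. -/
def inflateFunctions (V : Type u) [AddCommGroup V] [Module k V] :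
    translationRep k G V ⟶ Rep.res inr (translationRep k (SignExtension χ) V) :=
  Rep.ofHom
    { LinearMap.funLeft k V (rightHom : SignExtension χ →* G) with
      isIntertwining' _ := rfl }

lemma isZero_homology_gysinFunctor_translationRep (V : Type u) [AddCommGroup V] [Module k V]
    (n : ℕ) : IsZero (((gysinFunctor χ).obj (translationRep k (SignExtension χ) V)).homology
      (n + 1)) := by
  refine isZero_homology_fiber (f := (groupCohomology.cochainsFunctor k G).map
      (inflateFunctions χ V)) (fun i a b hab => ?_) (fun i f => ⟨fun hf => ?_, ?_⟩) (fun i f => ?_)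
      n (isZero_groupCohomology_translationRep V n)
  · funext v
    exact SemidirectProduct.rightHom_surjective.injective_comp_right (congrFun hab v)
  · refine ⟨fun v g => f v (SemidirectProduct.inr g), ?_⟩
    funext v x
    exact apply_inr_right χ (fun y => sub_eq_zero.1 (congrFun (congrFun hf v) y)) x
  · rintro ⟨a, rfl⟩
    funext v x
    refine sub_eq_zero.2 (congrArg (a v) ?_)
    simp
  · choose E hE using fun v => exists_mul_right_sub_eq (signGenerator χ) (f v) (by
      simp [orderOf_signGenerator])
    exact ⟨E, funext fun v => funext (hE v)⟩

lemma inhomogeneousCochains_d_zero_eq_zero_iff (M : Rep.{u} k G) (x : (Fin 0 → G) → M.V) :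
    (groupCohomology.inhomogeneousCochains M).d 0 1 x = 0 ↔ ∀ g v, M.ρ g (x v) = x v := by
  have d_apply (v : Fin 1 → G) : (groupCohomology.inhomogeneousCochains M).d 0 1 x v =
      M.ρ (v 0) (x default) - x default := by
    rw [groupCohomology.inhomogeneousCochains.d_def, inhomogeneousCochains.d_hom_apply]
    simp [Subsingleton.elim _ (default : Fin 0 → G), sub_eq_add_neg]
  constructor
  · intro h g v
    rw [Subsingleton.elim v default]
    exact sub_eq_zero.1 ((d_apply fun _ => g).symm.trans (congrFun h _))
  · exact fun h => funext fun v => (d_apply v).trans (sub_eq_zero.2 (h _ _))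

/-- Invariants of the extension, as `0`-cochains of `G`. -/
noncomputable def invariantsToGysin (M : Rep.{u} k (SignExtension χ)) :
    (Rep.invariantsFunctor k (SignExtension χ)).obj M ⟶ ((gysinFunctor χ).obj M).X 0 :=
  ModuleCat.ofHom
    { toFun m _ := m.1
      map_add' _ _ := rfl
      map_smul' _ _ := rfl }

lemma gysinFunctor_d_zero_eq_zero_iff (M : Rep.{u} k (SignExtension χ))
    (x : ((gysinFunctor χ).obj M).X 0) :
    ((gysinFunctor χ).obj M).d 0 1 x = 0 ↔ ∃ m, invariantsToGysin χ M m = x := by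
  have d_zero : ((gysinFunctor χ).obj M).d 0 1 x = 0 ↔
      (∀ g v, M.ρ (SemidirectProduct.inr g) (x v) = x v) ∧
        ∀ v, M.ρ (signGenerator χ) (x v) = x v := by
    refine (Eq.congr_left (fiber_d_zero_apply _ _)).trans (Prod.ext_iff.trans (and_congr
      (inhomogeneousCochains_d_zero_eq_zero_iff _ _)
      (funext_iff.trans (forall_congr' fun v => ?_))))
    exact sub_eq_zero
  rw [d_zero]
  constructor
  · rintro ⟨h_inr, h_gen⟩
    refine ⟨⟨x default, fun g => ?_⟩, funext fun v => congrArg x (Subsingleton.elim _ _)⟩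
    have := apply_inr_right χ (f := fun g => M.ρ g (x default)) fun y => by
      rw [map_mul, Module.End.mul_apply, h_gen]
    exact (this g).symm.trans (h_inr _ _)
  · rintro ⟨m, rfl⟩
    exact ⟨fun g _ => m.2 _, fun _ => m.2 _⟩

theorem nonempty_groupCohomology_iso_gysin (M : Rep.{u} k (SignExtension χ)) (n : ℕ) :
    Nonempty (groupCohomology M n ≅ ((gysinFunctor χ).obj M).homology n) :=
  nonempty_groupCohomology_iso (invariantsToGysin χ)
    (fun _ hS => shortExact_map_gysinFunctor χ hS)
    (fun V _ _ n => isZero_homology_gysinFunctor_translationRep χ V n) (fun _ => rfl)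
    (fun _ _ _ h => Subtype.ext (congrFun h default)) (gysinFunctor_d_zero_eq_zero_iff χ) M n

section Inflation

open SemidirectProduct

lemma gysinFunctor_obj_res_rightHom (M : Rep.{u} k G) :
    (gysinFunctor χ).obj (Rep.res rightHom M) =
      fiber (0 : groupCohomology.inhomogeneousCochains M ⟶
        groupCohomology.inhomogeneousCochains ((signTwist χ).obj M)) := by
  have zero : (generatorSubOne χ).app (Rep.res rightHom M) = 0 := by
    ext m
    change M.ρ (1 : G) m - m = 0
    rw [map_one, Module.End.one_apply, sub_self]
  exact congrArg fiber ((congrArg _ zero).trans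
    ((groupCohomology.cochainsFunctor k G).map_zero _ _))

theorem nonempty_groupCohomology_zero_res_rightHom (M : Rep.{u} k G) :
    Nonempty (groupCohomology (Rep.res (rightHom : SignExtension χ →* G) M) 0 ≃+
      groupCohomology M 0) := by
  obtain ⟨e⟩ := nonempty_groupCohomology_iso_gysin χ (Rep.res rightHom M) 0
  rw [gysinFunctor_obj_res_rightHom] at e
  exact nonempty_homology_zero_fiber_zero.map e.toLinearEquiv.toAddEquiv.trans

theorem nonempty_groupCohomology_succ_res_rightHom (M : Rep.{u} k G) (n : ℕ) :
    Nonempty (groupCohomology (Rep.res (rightHom : SignExtension χ →* G) M) (n + 1) ≃+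
      groupCohomology M (n + 1) × groupCohomology ((signTwist χ).obj M) n) := by
  obtain ⟨e⟩ := nonempty_groupCohomology_iso_gysin χ (Rep.res rightHom M) (n + 1)
  rw [gysinFunctor_obj_res_rightHom] at e
  exact (nonempty_homology_succ_fiber_zero n).map e.toLinearEquiv.toAddEquiv.trans

end Inflation

end Gysin

section Crystal

open Crystal Matrix SemidirectProduct

variable {q : ℕ} [NeZero q] {n : ℕ}

lemma toAdd_matAction_apply (M : Matrix (Fin n) (Fin n) ℤ) (hq : M ^ q = 1)
    (g : Multiplicative (ZMod q)) (v : Lat n) :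
    (matAction q M hq g v).toAdd = M ^ g.toAdd.val *ᵥ v.toAdd := by
  change (((glToAut n _) ^ g.toAdd.val) v).toAdd = _
  rw [← map_pow]
  change ((_ ^ g.toAdd.val : (Matrix (Fin n) (Fin n) ℤ)ˣ) : Matrix (Fin n) (Fin n) ℤ) *ᵥ _ = _
  rw [Units.val_pow_eq_pow_val]
  rfl

lemma pow_mulVec_vecCons {M : Matrix (Fin (n + 1)) (Fin (n + 1)) ℤ} {M' : Matrix (Fin n) (Fin n) ℤ}
    {c : ℤ} (hM : ∀ a v, M *ᵥ vecCons a v = vecCons (c * a) (M' *ᵥ v)) (j : ℕ) (a : ℤ)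
    (v : Fin n → ℤ) : M ^ j *ᵥ vecCons a v = vecCons (c ^ j * a) (M' ^ j *ᵥ v) := by
  induction j generalizing a v with
  | zero => simp
  | succ j ih => rw [pow_succ, ← mulVec_mulVec, hM, ih, mulVec_mulVec, ← pow_succ, ← mul_assoc,
      ← pow_succ]

lemma map_ofAdd_one_pow_val {A : Type*} [Monoid A] (θ : Multiplicative (ZMod q) →* A)
    (g : Multiplicative (ZMod q)) : θ (Multiplicative.ofAdd 1) ^ g.toAdd.val = θ g := by
  rw [← map_pow, ← ofAdd_nsmul, nsmul_one, ZMod.natCast_zmod_val, ofAdd_toAdd]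

variable {M : Matrix (Fin (n + 1)) (Fin (n + 1)) ℤ} {hq : M ^ q = 1}
  {M' : Matrix (Fin n) (Fin n) ℤ} {hq' : M' ^ q = 1} {θ : Multiplicative (ZMod q) →* ℤˣ}

/-- If `M` is block diagonal with blocks `±1` and `M'`, then `ℤ^(n+1) ⋊ ℤ/q` is an extension of
`ℤ^n ⋊ ℤ/q` by an infinite cyclic group. -/
def signExtensionEquivCrys
    (hM : ∀ a v, M *ᵥ vecCons a v = vecCons (θ (Multiplicative.ofAdd 1) * a) (M' *ᵥ v)) :
    SignExtension (θ.comp (rightHom : Crys q M' hq' →* _)) ≃* Crys q M hq where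
  toFun x := ⟨Multiplicative.ofAdd (vecCons x.left.toAdd x.right.left.toAdd), x.right.right⟩
  invFun y := ⟨Multiplicative.ofAdd (vecHead y.left.toAdd),
    ⟨Multiplicative.ofAdd (vecTail y.left.toAdd), y.right⟩⟩
  left_inv _ := rfl
  right_inv y := SemidirectProduct.ext
    (congrArg Multiplicative.ofAdd (cons_head_tail y.left.toAdd)) rfl
  map_mul' x y := by
    refine SemidirectProduct.ext (Multiplicative.toAdd.injective ?_) rfl
    change vecCons (x.left.toAdd + θ x.right.right * y.left.toAdd)
        (x.right.left.toAdd + (matAction q M' hq' x.right.right y.right.left).toAdd) =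
      vecCons x.left.toAdd x.right.left.toAdd + (matAction q M hq x.right.right
        (Multiplicative.ofAdd (vecCons y.left.toAdd y.right.left.toAdd))).toAdd
    rw [toAdd_matAction_apply, toAdd_matAction_apply, toAdd_ofAdd, pow_mulVec_vecCons hM,
      ← Units.val_pow_eq_pow_val, map_ofAdd_one_pow_val, cons_add_cons]

/-- `ℤ` with the action of `ℤ^n ⋊ ℤ/q` through a sign character `ψ` of `ℤ/q`. -/
abbrev signRep (M : Matrix (Fin n) (Fin n) ℤ) (hq : M ^ q = 1) (ψ : Multiplicative (ZMod q) →* ℤˣ) :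
    Rep ℤ (Crys q M hq) :=
  (signTwist (ψ.comp rightHom)).obj (Rep.trivial ℤ _ ℤ)

lemma nonempty_groupCohomology_signRep_iso_res
    (hM : ∀ a v, M *ᵥ vecCons a v = vecCons (θ (Multiplicative.ofAdd 1) * a) (M' *ᵥ v))
    (ψ : Multiplicative (ZMod q) →* ℤˣ) (i : ℕ) :
    Nonempty (groupCohomology (signRep M hq ψ) i ≃+
      groupCohomology (Rep.res (rightHom : SignExtension (θ.comp rightHom) →* _)
        (signRep M' hq' ψ)) i) :=
  ⟨(groupCohomology.mapIso (signExtensionEquivCrys hM) (LinearEquiv.refl ℤ ℤ)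
    (fun _ => rfl) i).symm.toLinearEquiv.toAddEquiv⟩

/-- A twist of a sign representation is a sign representation. -/
def signTwistSignRepIso (M : Matrix (Fin n) (Fin n) ℤ) (hq : M ^ q = 1)
    (θ ψ : Multiplicative (ZMod q) →* ℤˣ) :
    (signTwist (θ.comp rightHom)).obj (signRep M hq ψ) ≅ signRep M hq (θ * ψ) :=
  Rep.mkIso
    { LinearEquiv.refl ℤ ℤ with
      isIntertwining' g := by
        refine LinearMap.ext fun m => ?_
        change ((θ g.right : ℤˣ) : ℤ) • ((ψ g.right : ℤˣ) : ℤ) • m =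
          (((θ * ψ) g.right : ℤˣ) : ℤ) • m
        rw [smul_smul, MonoidHom.mul_apply, Units.val_mul] }

theorem nonempty_groupCohomology_signRep_zero
    (hM : ∀ a v, M *ᵥ vecCons a v = vecCons (θ (Multiplicative.ofAdd 1) * a) (M' *ᵥ v))
    (ψ : Multiplicative (ZMod q) →* ℤˣ) :
    Nonempty (groupCohomology (signRep M hq ψ) 0 ≃+ groupCohomology (signRep M' hq' ψ) 0) := by
  obtain ⟨e⟩ := nonempty_groupCohomology_signRep_iso_res hM ψ 0
  obtain ⟨e'⟩ := nonempty_groupCohomology_zero_res_rightHom (θ.comp rightHom) (signRep M' hq' ψ)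
  exact ⟨e.trans e'⟩

theorem nonempty_groupCohomology_signRep_succ
    (hM : ∀ a v, M *ᵥ vecCons a v = vecCons (θ (Multiplicative.ofAdd 1) * a) (M' *ᵥ v))
    (ψ : Multiplicative (ZMod q) →* ℤˣ) (i : ℕ) :
    Nonempty (groupCohomology (signRep M hq ψ) (i + 1) ≃+
      groupCohomology (signRep M' hq' ψ) (i + 1) ×
        groupCohomology (signRep M' hq' (θ * ψ)) i) := by
  obtain ⟨e⟩ := nonempty_groupCohomology_signRep_iso_res hM ψ (i + 1)
  obtain ⟨e'⟩ := nonempty_groupCohomology_succ_res_rightHom (θ.comp rightHom) (signRep M' hq' ψ) i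
  let twist := ((groupCohomology.functor ℤ _ i).mapIso
    (signTwistSignRepIso M' hq' θ ψ)).toLinearEquiv.toAddEquiv
  exact ⟨e.trans (e'.trans ((AddEquiv.refl _).prodCongr twist))⟩

end Crystal

section GroupRing

universe u

variable {k G : Type u} [CommRing k] [Group G]

/-- The action of the group ring on the space of a representation. -/
noncomputable abbrev groupRingModule (M : Rep.{u} k G) : Module (MonoidAlgebra k G) M.V :=
  Module.compHom M.V M.ρ.asAlgebraHom.toRingHom

attribute [local instance] groupRingModule

lemma of_smul (M : Rep.{u} k G) (g : G) (m : M.V) : MonoidAlgebra.of k G g • m = M.ρ g m :=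
  LinearMap.congr_fun (M.ρ.asAlgebraHom_of g) m

lemma hom_groupRing_smul {M N : Rep.{u} k G} (f : M ⟶ N) (a : MonoidAlgebra k G) (m : M.V) :
    f (a • m) = a • f m := by
  induction a using MonoidAlgebra.induction_on with
  | of g => rw [of_smul, of_smul, Rep.hom_comm_apply]
  | add a b ha hb => rw [add_smul, add_smul, map_add, ha, hb]
  | smul c a ha =>
    have smul_eq (P : Rep.{u} k G) (p : P.V) : (c • a) • p = c • a • p :=
      LinearMap.congr_fun (map_smul P.ρ.asAlgebraHom c a) p
    rw [smul_eq, smul_eq, map_smul, ha]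

lemma of_sub_one_smul (M : Rep.{u} k G) (g : G) (m : M.V) :
    (MonoidAlgebra.of k G g - 1) • m = M.ρ g m - m := by
  rw [sub_smul, one_smul, of_smul]

lemma sum_of_pow_smul (M : Rep.{u} k G) (g : G) (n : ℕ) (m : M.V) :
    (∑ i ∈ Finset.range n, MonoidAlgebra.of k G g ^ i) • m =
      ∑ i ∈ Finset.range n, M.ρ (g ^ i) m := by
  simp only [Finset.sum_smul, ← map_pow, of_smul]

section Translation

variable {V : Type u} [AddCommGroup V] [Module k V]

lemma of_sub_one_smul_eq_iff {g : G} {e f : (translationRep k G V).V} :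
    (MonoidAlgebra.of k G g - 1) • e = f ↔ ∀ x, e (x * g) - e x = f x := by
  rw [of_sub_one_smul]
  exact funext_iff

lemma sum_of_pow_smul_eq_iff {g : G} {n : ℕ} {e f : (translationRep k G V).V} :
    (∑ i ∈ Finset.range n, MonoidAlgebra.of k G g ^ i) • e = f ↔
      ∀ x, ∑ i ∈ Finset.range n, e (x * g ^ i) = f x := by
  rw [sum_of_pow_smul]
  exact funext_iff.trans (forall_congr' fun x => Eq.congr_left (Finset.sum_apply x _ _))

lemma exists_sub_one_smul_eq (g : G) (f : (translationRep k G V).V)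
    (hf : (∑ i ∈ Finset.range (orderOf g), MonoidAlgebra.of k G g ^ i) • f = 0) :
    ∃ e : (translationRep k G V).V, (MonoidAlgebra.of k G g - 1) • e = f := by
  obtain ⟨e, he⟩ := exists_mul_right_sub_eq g f (sum_of_pow_smul_eq_iff.1 hf)
  exact ⟨e, of_sub_one_smul_eq_iff.2 he⟩

lemma exists_norm_smul_eq {g : G} (hg : IsOfFinOrder g) (f : (translationRep k G V).V)
    (hf : (MonoidAlgebra.of k G g - 1) • f = 0) :
    ∃ e : (translationRep k G V).V,
      (∑ i ∈ Finset.range (orderOf g), MonoidAlgebra.of k G g ^ i) • e = f := by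
  obtain ⟨e, he⟩ := exists_sum_mul_right_eq g hg f
    fun x => sub_eq_zero.1 (of_sub_one_smul_eq_iff.1 hf x)
  exact ⟨e, sum_of_pow_smul_eq_iff.2 he⟩

variable {p : G} [(Subgroup.zpowers p).Normal]

lemma exists_invariant_sub_one_smul_eq {g : G} (hg : orderOf (g : G ⧸ Subgroup.zpowers p) = 0)
    (f : (translationRep k G V).V) (hf : (MonoidAlgebra.of k G p - 1) • f = 0) :
    ∃ e : (translationRep k G V).V, (MonoidAlgebra.of k G p - 1) • e = 0 ∧
      (MonoidAlgebra.of k G g - 1) • e = f := by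
  obtain ⟨e, hep, he⟩ := exists_invariant_mul_right_sub_eq hg
    fun x => sub_eq_zero.1 (of_sub_one_smul_eq_iff.1 hf x)
  exact ⟨e, of_sub_one_smul_eq_iff.2 fun x => sub_eq_zero.2 (hep x), of_sub_one_smul_eq_iff.2 he⟩

lemma exists_invariant_norm_smul_eq {g : G} (hg : IsOfFinOrder (g : G ⧸ Subgroup.zpowers p))
    (f : (translationRep k G V).V) (hp : (MonoidAlgebra.of k G p - 1) • f = 0)
    (hf : (MonoidAlgebra.of k G g - 1) • f = 0) :
    ∃ e : (translationRep k G V).V, (MonoidAlgebra.of k G p - 1) • e = 0 ∧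
      (∑ i ∈ Finset.range (orderOf (g : G ⧸ Subgroup.zpowers p)), MonoidAlgebra.of k G g ^ i) • e =
        f := by
  obtain ⟨e, hep, he⟩ := exists_invariant_sum_mul_right_eq hg
    (fun x => sub_eq_zero.1 (of_sub_one_smul_eq_iff.1 hp x))
    (fun x => sub_eq_zero.1 (of_sub_one_smul_eq_iff.1 hf x))
  exact ⟨e, of_sub_one_smul_eq_iff.2 fun x => sub_eq_zero.2 (hep x), sum_of_pow_smul_eq_iff.2 he⟩

end Translation

/-- The map `M^n → M^m` defined by an `m × n` matrix over the group ring. -/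
noncomputable def matrixMap {m n : ℕ} (P : Matrix (Fin m) (Fin n) (MonoidAlgebra k G))
    (M : Rep.{u} k G) : (Fin n → M.V) →ₗ[k] (Fin m → M.V) :=
  LinearMap.pi fun i => ∑ j, M.ρ.asAlgebraHom (P i j) ∘ₗ LinearMap.proj j

lemma matrixMap_apply {m n : ℕ} (P : Matrix (Fin m) (Fin n) (MonoidAlgebra k G)) (M : Rep.{u} k G)
    (x : Fin n → M.V) (i : Fin m) : matrixMap P M x i = ∑ j, P i j • x j := by
  simp only [matrixMap, LinearMap.pi_apply, LinearMap.sum_apply]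
  rfl

lemma matrixMap_zero (m : ℕ) {n : ℕ} (M : Rep.{u} k G) (x : Fin n → M.V) :
    matrixMap (0 : Matrix (Fin m) (Fin n) (MonoidAlgebra k G)) M x = 0 := by
  funext i
  rw [matrixMap_apply]
  exact Finset.sum_eq_zero fun j _ => zero_smul _ (x j)

lemma matrixMap_matrixMap {l m n : ℕ} (P : Matrix (Fin l) (Fin m) (MonoidAlgebra k G))
    (Q : Matrix (Fin m) (Fin n) (MonoidAlgebra k G)) (M : Rep.{u} k G) (x : Fin n → M.V) :
    matrixMap P M (matrixMap Q M x) = matrixMap (P * Q) M x := by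
  funext i
  simp only [matrixMap_apply, Matrix.mul_apply, Finset.smul_sum, Finset.sum_smul, mul_smul]
  exact Finset.sum_comm

lemma comp_matrixMap {m n : ℕ} (P : Matrix (Fin m) (Fin n) (MonoidAlgebra k G)) {M N : Rep.{u} k G}
    (f : M ⟶ N) (x : Fin n → M.V) : f ∘ matrixMap P M x = matrixMap P N (f ∘ x) := by
  funext i
  simp only [Function.comp_apply, matrixMap_apply, map_sum, hom_groupRing_smul]

variable {r : ℕ → ℕ} (D : ∀ n, Matrix (Fin (r (n + 1))) (Fin (r n)) (MonoidAlgebra k G))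
  (hD : ∀ n, D (n + 1) * D n = 0)

/-- The complex `Hom(F, M)`, where `F` is the complex of free modules over the group ring of ranks
`r 0, r 1, …` with differentials given by the matrices `D n`. -/
noncomputable def matrixComplex (M : Rep.{u} k G) : CochainComplex (ModuleCat.{u} k) ℕ :=
  CochainComplex.of (fun n => ModuleCat.of k (Fin (r n) → M.V))
    (fun n => ModuleCat.ofHom (matrixMap (D n) M)) fun n => by
      ext1
      refine LinearMap.ext fun x => (matrixMap_matrixMap _ _ M x).trans ?_
      rw [hD, matrixMap_zero]
      rfl

lemma matrixComplex_d_apply (M : Rep.{u} k G) (n : ℕ) (x : Fin (r n) → M.V) :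
    (matrixComplex D hD M).d n (n + 1) x = matrixMap (D n) M x :=
  congrArg (fun f : ModuleCat.of k (Fin (r n) → M.V) ⟶
      ModuleCat.of k (Fin (r (n + 1)) → M.V) => f x)
    (CochainComplex.of_d (fun n => ModuleCat.of k (Fin (r n) → M.V))
      (fun n => ModuleCat.ofHom (matrixMap (D n) M)) (j := n))

/-- The functor `M ↦ Hom(F, M)` for the complex of free modules `F` given by the matrices `D n`. -/
noncomputable def matrixFunctor : Rep.{u} k G ⥤ CochainComplex (ModuleCat.{u} k) ℕ where
  obj := matrixComplex D hD
  map {M N} f := CochainComplex.ofHom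
    (fun n => ModuleCat.ofHom (f.hom.toLinearMap.compLeft (Fin (r n)))) fun n => by
      ext1
      refine LinearMap.ext fun x => ?_
      refine (matrixComplex_d_apply D hD N n _).trans ?_
      exact ((comp_matrixMap (D n) f x).symm.trans
        (congrArg (f ∘ ·) (matrixComplex_d_apply D hD M n x).symm))

instance : (matrixFunctor D hD).PreservesZeroMorphisms where

lemma shortExact_map_matrixFunctor {S : ShortComplex (Rep.{u} k G)} (hS : S.ShortExact) :
    (S.map (matrixFunctor D hD)).ShortExact := by
  obtain ⟨inj, exact, surj⟩ := shortExact_rep_iff.1 hS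
  refine HomologicalComplex.shortExact_of_degreewise_shortExact _ fun n =>
    shortExact_moduleCat_iff.2 ⟨?_, fun y hy => ?_, fun y => ?_⟩
  · exact inj.comp_left
  · choose x hx using fun i => exact (y i) (congrFun hy i)
    exact ⟨x, funext hx⟩
  · choose x hx using fun i => surj (y i)
    exact ⟨x, funext hx⟩

end GroupRing

section AffineExtension

universe u

variable {k G : Type u} [CommRing k] [Group G]

attribute [local instance] groupRingModule

/-- The action of `G` on the space of a representation, written multiplicatively. -/
def affineAction (M : Rep.{u} k G) : G →* MulAut (Multiplicative M.V) where
  toFun g :=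
    { AddMonoidHom.toMultiplicative (M.ρ g).toAddMonoidHom with
      invFun m := Multiplicative.ofAdd (M.ρ g⁻¹ m.toAdd)
      left_inv m := congrArg Multiplicative.ofAdd (M.ρ.inv_self_apply g m.toAdd)
      right_inv m := congrArg Multiplicative.ofAdd (M.ρ.self_inv_apply g m.toAdd) }
  map_one' := MulEquiv.ext fun m => congrArg (fun f => Multiplicative.ofAdd (f m.toAdd))
    (map_one M.ρ)
  map_mul' g h := MulEquiv.ext fun m => congrArg (fun f => Multiplicative.ofAdd (f m.toAdd))
    (map_mul M.ρ g h)

/-- The split extension of `G` by the space of a representation `M`. Its sections over `G` are the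
crossed homomorphisms `G → M`. -/
abbrev AffineExtension (M : Rep.{u} k G) : Type u := Multiplicative M.V ⋊[affineAction M] G

/-- The element of the split extension with components `m` and `g`. -/
def affine {M : Rep.{u} k G} (m : M.V) (g : G) : AffineExtension M := ⟨Multiplicative.ofAdd m, g⟩

lemma affine_mul_affine {M : Rep.{u} k G} (m n : M.V) (g h : G) :
    affine m g * affine n h = affine (m + MonoidAlgebra.of k G g • n) (g * h) := by
  rw [of_smul]
  rfl

lemma affine_pow {M : Rep.{u} k G} (m : M.V) (g : G) (n : ℕ) :
    affine m g ^ n = affine ((∑ i ∈ Finset.range n, MonoidAlgebra.of k G g ^ i) • m) (g ^ n) := by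
  induction n with
  | zero =>
    rw [Finset.sum_range_zero, zero_smul, pow_zero, pow_zero]
    rfl
  | succ n ih =>
    rw [pow_succ, ih, affine_mul_affine, Finset.sum_range_succ, add_smul, map_pow, pow_succ]

lemma exists_left_eq_of_section {V : Type u} [AddCommGroup V] [Module k V]
    (F : G →* AffineExtension (translationRep k G V)) (hF : ∀ g, (F g).right = g) :
    ∃ e : (translationRep k G V).V, ∀ g, (F g).left =
      Multiplicative.ofAdd ((MonoidAlgebra.of k G g - 1) • e) := by
  refine ⟨fun x => (F x).left.toAdd 1, fun g => congrArg Multiplicative.ofAdd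
    (of_sub_one_smul_eq_iff.2 fun x => ?_).symm⟩
  have crossed : (F (x * g)).left = (F x).left * affineAction _ x (F g).left := by
    rw [map_mul, SemidirectProduct.mul_left, hF]
  have shift : (affineAction _ x (F g).left).toAdd 1 = (F g).left.toAdd x :=
    congrArg (F g).left.toAdd (one_mul x)
  rw [crossed]
  exact (add_sub_cancel_left _ _).trans shift

end AffineExtension

section Presentation

open Crystal Matrix SemidirectProduct

theorem exists_crys_hom {q n : ℕ} [NeZero q] {M : Matrix (Fin n) (Fin n) ℤ} (hq : M ^ q = 1)
    {E : Type*} [Group E] (f : Lat n →* E) {u : E} (hu : u ^ q = 1)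
    (hf : ∀ v : Lat n, f (Multiplicative.ofAdd (M *ᵥ v.toAdd)) = u * f v * u⁻¹) :
    ∃ F : Crys q M hq →* E, (∀ v, F (inl v) = f v) ∧ F (inr (Multiplicative.ofAdd 1)) = u := by
  have hf_pow (j : ℕ) (v : Lat n) :
      f (Multiplicative.ofAdd (M ^ j *ᵥ v.toAdd)) = u ^ j * f v * (u ^ j)⁻¹ := by
    induction j with
    | zero => simp
    | succ j ih =>
      have step := hf (Multiplicative.ofAdd (M ^ j *ᵥ v.toAdd))
      rw [toAdd_ofAdd, ih, mulVec_mulVec, ← pow_succ'] at step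
      rw [step, pow_succ', _root_.mul_inv_rev]
      simp only [mul_assoc]
  refine ⟨lift f (zmodHom q u hu) fun g => MonoidHom.ext fun v => ?_, lift_inl _ _ _, ?_⟩
  · exact (congrArg f (toAdd_matAction_apply M hq g v)).trans (hf_pow _ v)
  · refine (lift_inr _ _ _ _).trans ?_
    change u ^ (1 : ZMod q).val = u
    rw [ZMod.val_one_eq_one_mod, ← pow_eq_pow_mod 1 hu, pow_one]

/-- The homomorphism from `ℤ^3` determined by three commuting elements. -/
def latThreeHom {E : Type*} [Group E] {a b c : E} (hab : Commute a b) (hac : Commute a c)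
    (hbc : Commute b c) : Lat 3 →* E where
  toFun v := a ^ v.toAdd 0 * b ^ v.toAdd 1 * c ^ v.toAdd 2
  map_one' := by simp
  map_mul' v w := by
    simp only [toAdd_mul, Pi.add_apply, _root_.zpow_add]
    have h₁ := (hab.zpow_zpow (w.toAdd 0) (v.toAdd 1)).eq
    have h₂ := (hac.zpow_zpow (w.toAdd 0) (v.toAdd 2)).eq
    have h₃ := (hbc.zpow_zpow (w.toAdd 1) (v.toAdd 2)).eq
    grind

end Presentation

section BlockGroup

open Crystal SemidirectProduct Matrix

/-- The block of `holM` acting on the last three coordinates. -/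
def holBlock : Matrix (Fin 3) (Fin 3) ℤ := !![0, 0, -1; 1, 0, 1; 0, -1, 1]

lemma holBlock_pow : holBlock ^ 4 = 1 := by decide

/-- The crystallographic group `ℤ^3 ⋊ ℤ/4` of the three-dimensional block of `holM`. -/
abbrev BlockGroup : Type := Crys 4 holBlock holBlock_pow

namespace BlockGroup

/-- The generator of the point group `ℤ/4`. -/
def σ : BlockGroup := inr (Multiplicative.ofAdd 1)

/-- The product of the first lattice generator and `σ`. -/
def τ : BlockGroup := ⟨Multiplicative.ofAdd ![1, 0, 0], Multiplicative.ofAdd 1⟩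

/-- An involution commuting with `τ`. -/
def r : BlockGroup := ⟨Multiplicative.ofAdd ![0, 1, 1], Multiplicative.ofAdd 2⟩

lemma σ_pow_four : σ ^ 4 = 1 := SemidirectProduct.ext (by decide) (by decide)
lemma r_mul_r : r * r = 1 := SemidirectProduct.ext (by decide) (by decide)
lemma τ_mul_r : τ * r = r * τ := SemidirectProduct.ext (by decide) (by decide)
lemma τ_mul_σ : τ * σ = σ⁻¹ * r * τ := SemidirectProduct.ext (by decide) (by decide)

section Relations

variable {E : Type*} [Group E] {u t w a b c d : E}

lemma semiconjBy_of_pow_four_eq_one (hu : u ^ 4 = 1) (hab : SemiconjBy u a b)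
    (hbc : SemiconjBy u b c) (hcd : SemiconjBy u c d) : SemiconjBy u d a := by
  have h : SemiconjBy (u ^ 3) a d := by
    rw [pow_succ, pow_two]
    exact (hcd.mul_left hbc).mul_left hab
  have u_eq : u = (u ^ 3)⁻¹ := eq_inv_of_mul_eq_one_right (by rw [← pow_succ, hu])
  exact u_eq ▸ h.inv_symm_left

lemma conjugates_of_relations (hu : u ^ 4 = 1) (hw : w * w = 1) (htw : t * w = w * t)
    (htu : t * u = u⁻¹ * w * t) (ha : t = a * u) (hab : SemiconjBy u a b)
    (hbc : SemiconjBy u b c) (hcd : SemiconjBy u c d) (hda : SemiconjBy u d a) :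
    d = c * b⁻¹ * a ∧ a * c = b * d := by
  have hac : SemiconjBy (u ^ 2) a c := pow_two u ▸ hbc.mul_left hab
  have hbd : SemiconjBy (u ^ 2) b d := pow_two u ▸ hcd.mul_left hbc
  have hca : SemiconjBy (u ^ 2) c a := pow_two u ▸ hda.mul_left hcd
  have w_eq : w = b * c⁻¹ * u ^ 2 := by
    have : w * a = b * u ^ 2 := by
      refine mul_right_cancel (b := u) ?_
      rw [mul_assoc w, ← ha, eq_mul_of_inv_mul_eq (htu.trans (mul_assoc _ _ _)).symm, ha]
      rw [pow_two, ← mul_assoc, ← mul_assoc, hab.eq]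
      simp only [mul_assoc]
    rw [eq_mul_inv_of_mul_eq this, mul_assoc, hac.inv_right.eq, mul_assoc]
  have d_eq : d = c * b⁻¹ * a := by
    have : b * c⁻¹ * (d * a⁻¹) = 1 := by
      rw [← hw, w_eq, mul_assoc _ (u ^ 2), ← mul_assoc (u ^ 2), (hbd.mul_right hca.inv_right).eq,
        mul_assoc _ (u ^ 2), ← pow_add, hu, mul_one]
    rw [← mul_inv_eq_iff_eq_mul, eq_inv_of_mul_eq_one_right this, _root_.mul_inv_rev, inv_inv]
  have ac_eq : a * c = b * d := by
    have : a * (c * d⁻¹) = b := by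
      refine mul_right_cancel (b := u * u ^ 2) ?_
      rw [ha, w_eq, mul_assoc a, ← mul_assoc u, (hbc.mul_right hcd.inv_right).eq, mul_assoc _ u,
        mul_assoc _ (u ^ 2), ← mul_assoc (u ^ 2), hac.eq] at htw
      rw [mul_assoc a, htw, ← pow_succ', pow_succ]
      group
    rw [← mul_inv_eq_iff_eq_mul, mul_assoc, this]
  exact ⟨d_eq, ac_eq⟩

lemma commute_of_relations (hu : u ^ 4 = 1) (hw : w * w = 1) (htw : t * w = w * t)
    (htu : t * u = u⁻¹ * w * t) (ha : t = a * u) (hab : SemiconjBy u a b)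
    (hbc : SemiconjBy u b c) (hcd : SemiconjBy u c d) :
    Commute a b ∧ Commute a c ∧ Commute b c ∧ d = a * b⁻¹ * c := by
  have hda : SemiconjBy u d a := semiconjBy_of_pow_four_eq_one hu hab hbc hcd
  obtain ⟨d_eq, ac_eq⟩ := conjugates_of_relations hu hw htw htu ha hab hbc hcd hda
  have ac_comm : a * c = c * a := ac_eq.trans <| mul_right_cancel <|
    (hab.mul_right hcd).eq.symm.trans (ac_eq ▸ (hbc.mul_right hda).eq)
  have bc_comm : Commute b c := by
    refine mul_right_cancel (b := b⁻¹ * a) ?_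
    rw [mul_assoc, ← mul_assoc c, ← d_eq, ← ac_eq, ac_comm]
    group
  have ab_comm : Commute a b := by
    refine mul_left_cancel (a := u) ((hab.mul_right hbc).eq.trans ?_)
    rw [bc_comm.eq, (hbc.mul_right hab).eq]
  refine ⟨ab_comm, ac_comm, bc_comm, ?_⟩
  rw [ab_comm.inv_right.eq, mul_assoc, ac_eq, inv_mul_cancel_left]

lemma latThreeHom_holBlock_mulVec (hab : Commute a b) (hac : Commute a c) (hbc : Commute b c)
    (v : Lat 3) : latThreeHom hab hac.inv_right hbc.inv_right
        (Multiplicative.ofAdd (holBlock *ᵥ v.toAdd)) =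
      b ^ v.toAdd 0 * c ^ v.toAdd 1 * (a * b⁻¹ * c)⁻¹ ^ v.toAdd 2 := by
  set f := latThreeHom hab hac.inv_right hbc.inv_right with f_def
  let e (i : Fin 3) : Lat 3 := Multiplicative.ofAdd (Pi.single i 1)
  have mulVec_eq : Multiplicative.ofAdd (holBlock *ᵥ v.toAdd) =
      e 1 ^ v.toAdd 0 * (e 2)⁻¹ ^ v.toAdd 1 * (e 0 * (e 1)⁻¹ * (e 2)⁻¹)⁻¹ ^ v.toAdd 2 := by
    refine Multiplicative.toAdd.injective (funext fun i => ?_)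
    fin_cases i <;>
      simp [e, holBlock, dotProduct, Fin.sum_univ_three]
  have f_zero : f (e 0) = a := by simp [f_def, latThreeHom, e]
  have f_one : f (e 1) = b := by simp [f_def, latThreeHom, e]
  have f_two : f (e 2) = c⁻¹ := by simp [f_def, latThreeHom, e]
  simp only [mulVec_eq, map_mul, map_zpow, map_inv, f_zero, f_one, f_two, inv_inv]

lemma exists_hom_of_relations (hu : u ^ 4 = 1) (hw : w * w = 1) (htw : t * w = w * t)
    (htu : t * u = u⁻¹ * w * t) : ∃ F : BlockGroup →* E, F σ = u ∧ F r = w ∧ F τ = t := by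
  let a := t * u⁻¹
  have conj (x : E) : SemiconjBy u x (u * x * u⁻¹) := SemiconjBy.conj_mk u x
  obtain ⟨hab, hac, hbc, hd⟩ := commute_of_relations hu hw htw htu (inv_mul_cancel_right t u).symm
    (conj a) (conj _) (conj _)
  let b := u * a * u⁻¹
  let c := u * b * u⁻¹
  obtain ⟨F, F_inl, Fσ⟩ := exists_crys_hom holBlock_pow
    (latThreeHom hab hac.inv_right hbc.inv_right) hu fun v => by
      refine eq_mul_inv_of_mul_eq (SemiconjBy.eq ?_).symm
      rw [latThreeHom_holBlock_mulVec hab hac hbc, ← hd]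
      exact (((conj a).zpow_right _).mul_right ((conj b).zpow_right _)).mul_right
        ((conj c).inv_right.zpow_right _)
  have Fτ : F τ = t := by
    have τ_eq : τ = inl (Multiplicative.ofAdd ![1, 0, 0]) * σ :=
      SemidirectProduct.ext (by decide) (by decide)
    rw [τ_eq, map_mul, F_inl, show F σ = u from Fσ]
    simp [latThreeHom]
  refine ⟨F, Fσ, ?_, Fτ⟩
  have r_eq : r = σ * τ * σ * τ⁻¹ := by
    rw [mul_assoc σ, τ_mul_σ]
    group
  rw [r_eq, map_mul, map_mul, map_mul, map_inv, Fτ, show F σ = u from Fσ, mul_assoc u, htu]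
  group

end Relations

/-- The screw motion `τ * σ`, whose square `p` is central. -/
def s : BlockGroup := τ * σ

/-- A generator of the centre, which is the group of lattice vectors fixed by `σ`. -/
def p : BlockGroup := inl (Multiplicative.ofAdd ![1, 0, -1])

lemma s_mul_s : s * s = p := SemidirectProduct.ext (by decide) (by decide)
lemma s_mul_τ : s * τ = σ⁻¹ * p := SemidirectProduct.ext (by decide) (by decide)
lemma s_eq : s = σ⁻¹ * (τ * r) := SemidirectProduct.ext (by decide) (by decide)
lemma s_mul_inv_σ : s * σ⁻¹ = τ := mul_inv_cancel_right τ σ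

lemma p_mul (x : BlockGroup) : p * x = x * p := by
  have fixed : ∀ g, matAction 4 holBlock holBlock_pow g (Multiplicative.ofAdd ![1, 0, -1]) =
    Multiplicative.ofAdd ![1, 0, -1] := by decide
  refine SemidirectProduct.ext ?_ ?_
  · simp [p, fixed, mul_comm]
  · simp [p]

instance : (Subgroup.zpowers p).Normal where
  conj_mem x hx g := by
    have comm : Commute g x := by
      obtain ⟨i, rfl⟩ := hx
      exact Commute.zpow_right (p_mul g).symm i
    rwa [comm.eq, mul_inv_cancel_right]

lemma τ_mul_inv_σ : τ * σ⁻¹ = inl (Multiplicative.ofAdd ![1, 0, 0]) :=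
  SemidirectProduct.ext (by decide) (by decide)

lemma orderOf_σ : orderOf σ = 4 :=
  orderOf_eq_prime_pow (p := 2) (n := 1)
    (fun h => absurd (congrArg SemidirectProduct.right h) (by decide)) σ_pow_four

lemma orderOf_r : orderOf r = 2 :=
  orderOf_eq_prime (by rw [pow_two, r_mul_r])
    fun h => absurd (congrArg SemidirectProduct.right h) (by decide)

lemma orderOf_p : orderOf p = 0 := by
  rw [p, orderOf_injective _ inl_injective, orderOf_eq_zero_iff]
  exact not_isOfFinOrder_of_isMulTorsionFree (by decide)

lemma orderOf_s : orderOf s = 0 := by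
  rw [orderOf_eq_zero_iff]
  intro h
  exact orderOf_eq_zero_iff.1 orderOf_p (by rw [← s_mul_s, ← pow_two]; exact h.pow)

lemma orderOf_mk_τ_mul_inv_σ :
    orderOf ((τ * σ⁻¹ : BlockGroup) : BlockGroup ⧸ Subgroup.zpowers p) = 0 := by
  rw [orderOf_eq_zero_iff']
  intro n hn h
  rw [← QuotientGroup.mk_pow, QuotientGroup.eq_one_iff] at h
  obtain ⟨m, hm⟩ := h
  have hv : m • ![1, 0, -1] = n • ![1, 0, 0] := by
    simp only [p, τ_mul_inv_σ, ← map_zpow, ← map_pow] at hm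
    exact congrArg Multiplicative.toAdd (inl_injective hm)
  have h₀ : m = n := by simpa using congrFun hv 0
  have h₂ : m = 0 := by simpa using congrFun hv 2
  lia

lemma orderOf_mk_s : orderOf (s : BlockGroup ⧸ Subgroup.zpowers p) = 2 := by
  refine orderOf_eq_prime ?_ fun h => ?_
  · rw [← QuotientGroup.mk_pow, QuotientGroup.eq_one_iff, pow_two, s_mul_s]
    exact Subgroup.mem_zpowers p
  · obtain ⟨m, hm⟩ := (QuotientGroup.eq_one_iff s).1 h
    have right_eq := congrArg rightHom hm
    rw [map_zpow, p, rightHom_inl, _root_.one_zpow] at right_eq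
    exact absurd right_eq (by decide)

lemma closure_σ_τ : Subgroup.closure {σ, τ} = ⊤ := by
  set K := Subgroup.closure {σ, τ}
  have hσ : σ ∈ K := Subgroup.subset_closure (by simp)
  have hτ : τ ∈ K := Subgroup.subset_closure (by simp)
  let e (i : Fin 3) : BlockGroup := inl (Multiplicative.ofAdd (Pi.single i 1))
  have he₀ : e 0 ∈ K := by
    have : e 0 = τ * σ⁻¹ := SemidirectProduct.ext (by decide) (by decide)
    exact this ▸ K.mul_mem hτ (K.inv_mem hσ)
  have he₁ : e 1 ∈ K := by
    have : e 1 = σ * e 0 * σ⁻¹ := SemidirectProduct.ext (by decide) (by decide)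
    exact this ▸ K.mul_mem (K.mul_mem hσ he₀) (K.inv_mem hσ)
  have he₂ : e 2 ∈ K := by
    have : e 2 = (σ * e 1 * σ⁻¹)⁻¹ := SemidirectProduct.ext (by decide) (by decide)
    exact this ▸ K.inv_mem (K.mul_mem (K.mul_mem hσ he₁) (K.inv_mem hσ))
  refine (Subgroup.eq_top_iff' K).2 fun x => ?_
  have left_eq : inl x.left =
      e 0 ^ x.left.toAdd 0 * e 1 ^ x.left.toAdd 1 * e 2 ^ x.left.toAdd 2 := by
    simp only [e, ← map_zpow, ← map_mul]
    congr 1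
    refine Multiplicative.toAdd.injective (funext fun i => ?_)
    fin_cases i <;> simp
  have right_eq : inr x.right = σ ^ x.right.toAdd.val :=
    (map_ofAdd_one_pow_val inr x.right).symm
  rw [← inl_left_mul_inr_right x, left_eq, right_eq]
  exact K.mul_mem (K.mul_mem (K.mul_mem (K.zpow_mem he₀ _) (K.zpow_mem he₁ _))
    (K.zpow_mem he₂ _)) (K.pow_mem hσ _)

end BlockGroup
end BlockGroup

section BlockResolution

attribute [local instance] groupRingModule

namespace BlockGroup

variable {k : Type} [CommRing k]

local notation "δ" => MonoidAlgebra.of k BlockGroup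

variable (k) in
/-- The norm element `1 + σ + σ² + σ³` of the group ring. -/
noncomputable def norm : MonoidAlgebra k BlockGroup := ∑ i ∈ Finset.range 4, δ σ ^ i

lemma norm_mul_σ_sub_one : norm k * (δ σ - 1) = 0 := by
  rw [norm, geom_sum_mul, ← map_pow, σ_pow_four, map_one, sub_self]

lemma σ_sub_one_mul_norm : (δ σ - 1) * norm k = 0 := by
  rw [norm, mul_geom_sum, ← map_pow, σ_pow_four, map_one, sub_self]

lemma norm_mul_of_inv_σ_mul (x : BlockGroup) : norm k * δ (σ⁻¹ * x) = norm k * δ x := by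
  have norm_mul_σ : norm k * δ σ = norm k := by
    rw [← sub_eq_zero, ← mul_sub_one, norm_mul_σ_sub_one]
  nth_rewrite 1 [← norm_mul_σ]
  rw [mul_assoc, ← map_mul, mul_inv_cancel_left]

lemma p_sub_one_mul (a : MonoidAlgebra k BlockGroup) : (δ p - 1) * a = a * (δ p - 1) := by
  suffices δ p * a = a * δ p by rw [sub_one_mul, mul_sub_one, this]
  induction a using MonoidAlgebra.induction_on with
  | of x => rw [← map_mul, p_mul, map_mul]
  | add a b ha hb => rw [mul_add, add_mul, ha, hb]
  | smul c a ha => rw [mul_smul_comm, smul_mul_assoc, ha]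

lemma one_add_r_mul_r_sub_one : (1 + δ r) * (δ r - 1) = 0 := by
  simp only [add_mul, mul_sub, mul_one, one_mul, ← map_mul, r_mul_r, map_one]
  abel

lemma r_sub_one_mul_one_add_r : (δ r - 1) * (1 + δ r) = 0 := by
  simp only [mul_add, sub_mul, mul_one, one_mul, ← map_mul, r_mul_r, map_one]
  abel

lemma τ_sub_one_mul_r_sub_one : (δ τ - 1) * (δ r - 1) = (δ r - 1) * (δ τ - 1) := by
  simp only [mul_sub, sub_mul, mul_one, one_mul, ← map_mul, τ_mul_r]
  abel

lemma τ_sub_one_mul_one_add_r : (δ τ - 1) * (1 + δ r) = (1 + δ r) * (δ τ - 1) := by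
  simp only [mul_sub, sub_mul, mul_add, add_mul, mul_one, one_mul, ← map_mul, τ_mul_r]
  abel

variable (k)

/-- The matrix of the differential from degree `0` to degree `1`, in terms of the generators `σ`,
`r`, `τ` of the block group. -/
noncomputable def diffZero : Matrix (Fin 3) (Fin 1) (MonoidAlgebra k BlockGroup) :=
  !![δ σ - 1; δ r - 1; δ τ - 1]

/-- The matrix of the differential from degree `1` to degree `2`: the Fox derivatives of the
relations `σ ^ 4 = 1`, `r ^ 2 = 1`, `τ * r = r * τ` and `τ * σ = σ⁻¹ * r * τ`. -/
noncomputable def diffOne : Matrix (Fin 4) (Fin 3) (MonoidAlgebra k BlockGroup) :=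
  !![norm k, 0, 0;
    0, 1 + δ r, 0;
    0, δ τ - 1, -(δ r - 1);
    -(δ σ⁻¹ + δ τ), δ σ⁻¹, δ (σ⁻¹ * r) - 1]

/-- The matrix of the differential from degree `2` to degree `3`. -/
noncomputable def diffTwo : Matrix (Fin 4) (Fin 4) (MonoidAlgebra k BlockGroup) :=
  !![δ σ - 1, 0, 0, 0;
    δ p - 1, 0, -norm k, norm k * (δ s - 1);
    0, δ r - 1, 0, 0;
    0, δ τ - 1, -(1 + δ r), 0]

/-- The matrix of the differential from an odd degree at least `3`: the sum of the standard
complexes of the subgroups `⟨σ⟩ × ⟨p⟩` and `⟨r⟩ × ⟨τ⟩`. -/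
noncomputable def diffOdd : Matrix (Fin 4) (Fin 4) (MonoidAlgebra k BlockGroup) :=
  !![norm k, 0, 0, 0;
    δ p - 1, -(δ σ - 1), 0, 0;
    0, 0, 1 + δ r, 0;
    0, 0, δ τ - 1, -(δ r - 1)]

/-- The matrix of the differential from an even degree at least `4`. -/
noncomputable def diffEven : Matrix (Fin 4) (Fin 4) (MonoidAlgebra k BlockGroup) :=
  !![δ σ - 1, 0, 0, 0;
    δ p - 1, -norm k, 0, 0;
    0, 0, δ r - 1, 0;
    0, 0, δ τ - 1, -(1 + δ r)]

lemma diffOne_mul_diffZero : diffOne k * diffZero k = 0 := by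
  have relation : -((δ σ⁻¹ + δ τ) * (δ σ - 1)) +
      (δ σ⁻¹ * (δ r - 1) + (δ (σ⁻¹ * r) - 1) * (δ τ - 1)) = 0 := by
    simp only [add_mul, sub_mul, mul_sub, mul_one, one_mul, ← map_mul, τ_mul_σ,
      inv_mul_cancel, map_one]
    abel
  ext1 i j
  fin_cases i <;> fin_cases j <;>
    simp [diffOne, diffZero, Matrix.mul_apply, Fin.sum_univ_succ, norm_mul_σ_sub_one,
      one_add_r_mul_r_sub_one, τ_sub_one_mul_r_sub_one, relation, -MonoidAlgebra.of_apply,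
      -map_mul, -neg_sub, -neg_add_rev]

lemma diffTwo_mul_diffOne : diffTwo k * diffOne k = 0 := by
  have norm_mul_inv_σ : norm k * δ σ⁻¹ = norm k := by
    simpa only [mul_one, map_one] using norm_mul_of_inv_σ_mul (k := k) 1
  have column_zero : norm k * (δ p - 1) + -(norm k * (δ s - 1) * (δ σ⁻¹ + δ τ)) = 0 := by
    simp only [mul_assoc, sub_mul, mul_sub, mul_add, mul_one, ← map_mul, s_mul_τ,
      s_mul_inv_σ, norm_mul_of_inv_σ_mul, norm_mul_inv_σ]
    abel
  have column_one : -(norm k * (δ τ - 1)) + norm k * (δ s - 1) * δ σ⁻¹ = 0 := by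
    simp only [mul_assoc, sub_mul, mul_sub, mul_one, ← map_mul, s_mul_inv_σ,
      norm_mul_inv_σ]
    abel
  have column_two : norm k * (δ r - 1) + norm k * (δ s - 1) * (δ (σ⁻¹ * r) - 1) = 0 := by
    have norm_mul_s : norm k * δ s = norm k * δ (τ * r) := by rw [s_eq, norm_mul_of_inv_σ_mul]
    have s_mul : s * (σ⁻¹ * r) = τ * r := by rw [← mul_assoc, s_mul_inv_σ]
    simp only [mul_assoc, sub_mul, mul_sub, mul_one, ← map_mul, s_mul,
      norm_mul_of_inv_σ_mul]
    rw [norm_mul_s]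
    abel
  ext1 i j
  fin_cases i <;> fin_cases j <;>
    simp [diffOne, diffTwo, Matrix.mul_apply, Fin.sum_univ_succ, σ_sub_one_mul_norm,
      r_sub_one_mul_one_add_r, one_add_r_mul_r_sub_one, τ_sub_one_mul_one_add_r,
      p_sub_one_mul (norm k), column_zero, column_one, column_two,
      -MonoidAlgebra.of_apply, -map_mul, -neg_sub, -neg_add_rev]

lemma diffOdd_mul_diffTwo : diffOdd k * diffTwo k = 0 := by
  ext1 i j
  fin_cases i <;> fin_cases j <;>
    simp [diffOdd, diffTwo, Matrix.mul_apply, Fin.sum_univ_succ, ← mul_assoc, norm_mul_σ_sub_one,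
      σ_sub_one_mul_norm, one_add_r_mul_r_sub_one, r_sub_one_mul_one_add_r,
      τ_sub_one_mul_r_sub_one, p_sub_one_mul (δ σ - 1), -MonoidAlgebra.of_apply, -map_mul,
      -neg_sub, -neg_add_rev]

lemma diffEven_mul_diffOdd : diffEven k * diffOdd k = 0 := by
  ext1 i j
  fin_cases i <;> fin_cases j <;>
    simp [diffOdd, diffEven, Matrix.mul_apply, Fin.sum_univ_succ, norm_mul_σ_sub_one,
      σ_sub_one_mul_norm, one_add_r_mul_r_sub_one, r_sub_one_mul_one_add_r,
      τ_sub_one_mul_one_add_r, p_sub_one_mul (norm k), -MonoidAlgebra.of_apply, -map_mul,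
      -neg_sub, -neg_add_rev]

lemma diffOdd_mul_diffEven : diffOdd k * diffEven k = 0 := by
  ext1 i j
  fin_cases i <;> fin_cases j <;>
    simp [diffOdd, diffEven, Matrix.mul_apply, Fin.sum_univ_succ, norm_mul_σ_sub_one,
      σ_sub_one_mul_norm, one_add_r_mul_r_sub_one, r_sub_one_mul_one_add_r,
      τ_sub_one_mul_r_sub_one, p_sub_one_mul (δ σ - 1), -MonoidAlgebra.of_apply, -map_mul,
      -neg_sub, -neg_add_rev]

/-- The ranks of the free modules in the resolution with differentials `diff`. -/
def rank : ℕ → ℕ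
  | 0 => 1
  | 1 => 3
  | _ + 2 => 4

/-- The differentials of `Hom(F, M)` for a free resolution `F` of the trivial module of the block
group. -/
noncomputable def diff :
    ∀ n, Matrix (Fin (rank (n + 1))) (Fin (rank n)) (MonoidAlgebra k BlockGroup)
  | 0 => diffZero k
  | 1 => diffOne k
  | 2 => diffTwo k
  | n + 3 => if Even n then diffOdd k else diffEven k

lemma diff_of_odd {n : ℕ} (hn : Odd (n + 3)) : diff k (n + 3) = diffOdd k :=
  if_pos (by grind)

lemma diff_of_even {n : ℕ} (hn : Even (n + 3)) : diff k (n + 3) = diffEven k :=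
  if_neg (by grind)

lemma diff_mul_diff : ∀ n, diff k (n + 1) * diff k n = 0
  | 0 => diffOne_mul_diffZero k
  | 1 => diffTwo_mul_diffOne k
  | 2 => diffOdd_mul_diffTwo k
  | n + 3 => by
    rcases Nat.even_or_odd (n + 3) with hn | hn
    · rw [diff_of_even k hn, diff_of_odd k hn.add_one]
      exact diffOdd_mul_diffEven k
    · rw [diff_of_odd k hn, diff_of_even k hn.add_one]
      exact diffEven_mul_diffOdd k

variable {k}

section Formulas

variable (M : Rep.{0} k BlockGroup)

lemma matrixMap_diffZero (x : Fin 1 → M.V) : matrixMap (diffZero k) M x =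
    ![(δ σ - 1) • x 0, (δ r - 1) • x 0, (δ τ - 1) • x 0] := by
  funext i
  rw [matrixMap_apply]
  fin_cases i <;> simp [diffZero, -MonoidAlgebra.of_apply]

lemma matrixMap_diffOne (x : Fin 3 → M.V) : matrixMap (diffOne k) M x =
    ![norm k • x 0, (1 + δ r) • x 1, (δ τ - 1) • x 1 - (δ r - 1) • x 2,
      δ σ⁻¹ • x 1 + (δ (σ⁻¹ * r) - 1) • x 2 - (δ σ⁻¹ + δ τ) • x 0] := by
  funext i
  rw [matrixMap_apply]
  fin_cases i <;> simp [diffOne, Fin.sum_univ_succ, -MonoidAlgebra.of_apply, -map_mul, -neg_sub,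
    -neg_add_rev, neg_smul, sub_eq_add_neg]
  abel

lemma matrixMap_diffTwo (x : Fin 4 → M.V) : matrixMap (diffTwo k) M x =
    ![(δ σ - 1) • x 0, (δ p - 1) • x 0 - norm k • x 2 + norm k • (δ s - 1) • x 3,
      (δ r - 1) • x 1, (δ τ - 1) • x 1 - (1 + δ r) • x 2] := by
  funext i
  rw [matrixMap_apply]
  fin_cases i <;> simp [diffTwo, Fin.sum_univ_succ, -MonoidAlgebra.of_apply, -map_mul, -neg_sub,
    -neg_add_rev, neg_smul, sub_eq_add_neg, mul_smul, add_assoc]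

lemma matrixMap_diffOdd (x : Fin 4 → M.V) : matrixMap (diffOdd k) M x =
    ![norm k • x 0, (δ p - 1) • x 0 - (δ σ - 1) • x 1,
      (1 + δ r) • x 2, (δ τ - 1) • x 2 - (δ r - 1) • x 3] := by
  funext i
  rw [matrixMap_apply]
  fin_cases i <;> simp [diffOdd, Fin.sum_univ_succ, -MonoidAlgebra.of_apply, -map_mul, -neg_sub,
    -neg_add_rev, neg_smul, sub_eq_add_neg]

lemma matrixMap_diffEven (x : Fin 4 → M.V) : matrixMap (diffEven k) M x =
    ![(δ σ - 1) • x 0, (δ p - 1) • x 0 - norm k • x 1,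
      (δ r - 1) • x 2, (δ τ - 1) • x 2 - (1 + δ r) • x 3] := by
  funext i
  rw [matrixMap_apply]
  fin_cases i <;> simp [diffEven, Fin.sum_univ_succ, -MonoidAlgebra.of_apply, -map_mul, -neg_sub,
    -neg_add_rev, neg_smul, sub_eq_add_neg]

end Formulas

section Acyclicity

variable {V : Type} [AddCommGroup V] [Module k V] {f : (translationRep k BlockGroup V).V}

lemma exists_σ_sub_one_smul (hf : norm k • f = 0) :
    ∃ e : (translationRep k BlockGroup V).V, (δ σ - 1) • e = f :=
  exists_sub_one_smul_eq σ f (by rwa [orderOf_σ])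

lemma exists_norm_smul (hf : (δ σ - 1) • f = 0) :
    ∃ e : (translationRep k BlockGroup V).V, norm k • e = f := by
  have := exists_norm_smul_eq (orderOf_pos_iff.1 (by rw [orderOf_σ]; decide)) f hf
  rwa [orderOf_σ] at this

lemma sum_range_two_of_pow (x : BlockGroup) : ∑ i ∈ Finset.range 2, δ x ^ i = 1 + δ x := by
  rw [Finset.sum_range_succ, Finset.sum_range_one, pow_zero, pow_one]

lemma exists_r_sub_one_smul (hf : (1 + δ r) • f = 0) :
    ∃ e : (translationRep k BlockGroup V).V, (δ r - 1) • e = f :=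
  exists_sub_one_smul_eq r f (by rwa [orderOf_r, sum_range_two_of_pow])

lemma exists_one_add_r_smul (hf : (δ r - 1) • f = 0) :
    ∃ e : (translationRep k BlockGroup V).V, (1 + δ r) • e = f := by
  have := exists_norm_smul_eq (orderOf_pos_iff.1 (by rw [orderOf_r]; decide)) f hf
  rwa [orderOf_r, sum_range_two_of_pow] at this

variable (f) in
lemma exists_sub_one_smul_of_orderOf_eq_zero {x : BlockGroup} (hx : orderOf x = 0) :
    ∃ e : (translationRep k BlockGroup V).V, (δ x - 1) • e = f :=
  exists_sub_one_smul_eq x f (by rw [hx, Finset.sum_range_zero, zero_smul])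

lemma s_sub_one_mul : (δ s - 1) * (1 - δ τ + δ s - δ σ⁻¹) = (δ σ - 1) * δ σ⁻¹ * (δ p - 1) := by
  simp only [sub_mul, mul_sub, mul_add, mul_one, one_mul, ← map_mul, s_mul_s, s_mul_τ, s_mul_inv_σ,
    mul_inv_cancel, map_one]
  abel

lemma one_add_s_mul : (1 + δ s) * (δ (τ * σ⁻¹) - 1) =
    (1 - δ τ + δ s - δ σ⁻¹) * -(1 + δ σ⁻¹) + δ σ⁻¹ * δ σ⁻¹ * (δ p - 1) := by
  have h₁ : s * (τ * σ⁻¹) = σ⁻¹ * σ⁻¹ * p := by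
    rw [← mul_assoc, s_mul_τ, mul_assoc, p_mul, mul_assoc]
  simp only [sub_mul, mul_sub, mul_add, add_mul, mul_neg, mul_one, one_mul, ← map_mul, h₁,
    s_mul_inv_σ]
  abel

lemma exists_smul_eq_of_s_sub_one_smul_eq_zero (hf : (δ s - 1) • f = 0) :
    ∃ m : (translationRep k BlockGroup V).V, (1 - δ τ + δ s - δ σ⁻¹) • m = f := by
  have hp : (δ p - 1) • f = 0 := by
    have : δ p - 1 = (1 + δ s) * (δ s - 1) := by
      simp only [mul_sub, add_mul, mul_one, one_mul, ← map_mul, s_mul_s]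
      abel
    rw [this, mul_smul, hf, smul_zero]
  obtain ⟨z, hzp, hz⟩ := exists_invariant_norm_smul_eq
    (orderOf_pos_iff.1 (by rw [orderOf_mk_s]; decide)) f hp hf
  rw [orderOf_mk_s, sum_range_two_of_pow] at hz
  obtain ⟨w, hwp, hw⟩ := exists_invariant_sub_one_smul_eq orderOf_mk_τ_mul_inv_σ z hzp
  refine ⟨-(1 + δ σ⁻¹) • w, ?_⟩
  rw [← hz, ← hw, ← mul_smul, ← mul_smul, one_add_s_mul, add_smul, mul_smul _ (δ p - 1), hwp,
    smul_zero, add_zero]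

lemma exists_smul_eq_of_norm_smul_eq_zero (hf : norm k • (δ s - 1) • f = 0) :
    ∃ m : (translationRep k BlockGroup V).V, (1 - δ τ + δ s - δ σ⁻¹) • m = f := by
  obtain ⟨w, hw⟩ := exists_σ_sub_one_smul hf
  obtain ⟨m, hm⟩ := exists_sub_one_smul_of_orderOf_eq_zero (δ σ • w) orderOf_p
  obtain ⟨m', hm'⟩ := exists_smul_eq_of_s_sub_one_smul_eq_zero
    (f := f - (1 - δ τ + δ s - δ σ⁻¹) • m) (by
      rw [smul_sub, ← mul_smul, s_sub_one_mul, mul_smul, hm, ← mul_smul, mul_assoc, ← map_mul,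
        inv_mul_cancel, map_one, mul_one, hw, sub_self])
  exact ⟨m + m', by rw [smul_add, hm', add_sub_cancel]⟩

lemma exists_matrixMap_diffOne_eq_of_norm_smul_eq_zero {f : (translationRep k BlockGroup V).V}
    (hf : norm k • (δ s - 1) • f = 0) :
    ∃ y, matrixMap (diffOne k) (translationRep k BlockGroup V) y = ![0, 0, 0, f] := by
  obtain ⟨m, rfl⟩ := exists_smul_eq_of_norm_smul_eq_zero hf
  refine ⟨![-(δ σ - 1) • m, 0, 0], (matrixMap_diffOne _ _).trans ?_⟩
  have factor : 1 - δ τ + δ s - δ σ⁻¹ = -((δ σ⁻¹ + δ τ) * -(δ σ - 1)) := by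
    simp only [add_mul, mul_neg, mul_sub, mul_one, ← map_mul, inv_mul_cancel, map_one, s]
    abel
  funext i
  fin_cases i
  · refine (mul_smul _ _ m).symm.trans ?_
    rw [mul_neg, norm_mul_σ_sub_one, neg_zero, zero_smul]
    rfl
  · exact smul_zero _
  · exact (congrArg₂ _ (smul_zero _) (smul_zero _)).trans (sub_zero 0)
  · change δ σ⁻¹ • 0 + (δ (σ⁻¹ * r) - 1) • 0 - (δ σ⁻¹ + δ τ) • -(δ σ - 1) • m =
      (1 - δ τ + δ s - δ σ⁻¹) • m
    rw [smul_zero, smul_zero, add_zero, zero_sub, ← mul_smul, ← neg_smul, factor]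

lemma exists_matrixMap_diffOne_eq {x : Fin 4 → (translationRep k BlockGroup V).V}
    (hx : matrixMap (diffTwo k) _ x = 0) : ∃ y, matrixMap (diffOne k) _ y = x := by
  have hx' := hx
  rw [matrixMap_diffTwo] at hx
  obtain ⟨a, ha⟩ := exists_norm_smul (congrFun hx 0)
  obtain ⟨b, hb⟩ := exists_one_add_r_smul (congrFun hx 2)
  obtain ⟨c, hc⟩ := exists_r_sub_one_smul (f := (δ τ - 1) • b - x 2) (by
    rw [smul_sub, ← mul_smul, ← τ_sub_one_mul_one_add_r, mul_smul, hb]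
    exact congrFun hx 3)
  obtain ⟨f, hf⟩ : ∃ f, x - matrixMap (diffOne k) _ ![a, b, c] = ![0, 0, 0, f] := by
    refine ⟨x 3 - matrixMap (diffOne k) _ ![a, b, c] 3, ?_⟩
    rw [matrixMap_diffOne]
    funext i
    fin_cases i
    · exact sub_eq_zero.2 ha.symm
    · exact sub_eq_zero.2 hb.symm
    · exact sub_eq_zero.2 (sub_eq_of_eq_add' (eq_add_of_sub_eq hc.symm)).symm
    · rfl
  have hxy : matrixMap (diffTwo k) _ (![0, 0, 0, f] : Fin 4 → (translationRep k BlockGroup V).V) =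
      0 := by
    rw [← hf, map_sub, hx', matrixMap_matrixMap, diffTwo_mul_diffOne, matrixMap_zero, sub_zero]
  rw [matrixMap_diffTwo] at hxy
  obtain ⟨y, hy⟩ := exists_matrixMap_diffOne_eq_of_norm_smul_eq_zero (f := f) (by
    simpa using congrFun hxy 1)
  exact ⟨![a, b, c] + y, by rw [map_add, hy, ← hf, add_sub_cancel]⟩

lemma exists_matrixMap_diffTwo_eq {x : Fin 4 → (translationRep k BlockGroup V).V}
    (hx : matrixMap (diffOdd k) _ x = 0) : ∃ y, matrixMap (diffTwo k) _ y = x := by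
  rw [matrixMap_diffOdd] at hx
  obtain ⟨a, ha⟩ := exists_σ_sub_one_smul (congrFun hx 0)
  obtain ⟨b, hb⟩ := exists_r_sub_one_smul (congrFun hx 2)
  obtain ⟨c, hc⟩ := exists_one_add_r_smul (f := (δ τ - 1) • b - x 3) (by
    rw [smul_sub, ← mul_smul, ← τ_sub_one_mul_r_sub_one, mul_smul, hb]
    exact congrFun hx 3)
  obtain ⟨e, he⟩ := exists_norm_smul (f := x 1 - (δ p - 1) • a + norm k • c) (by
    rw [smul_add, smul_sub, ← mul_smul, ← mul_smul, ← p_sub_one_mul, mul_smul, ha,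
      σ_sub_one_mul_norm, zero_smul, add_zero, ← neg_eq_zero, neg_sub]
    exact congrFun hx 1)
  obtain ⟨f, hf⟩ := exists_sub_one_smul_of_orderOf_eq_zero e orderOf_s
  refine ⟨![a, b, c, f], (matrixMap_diffTwo _ _).trans ?_⟩
  funext i
  fin_cases i
  · exact ha
  · change (δ p - 1) • a - norm k • c + norm k • (δ s - 1) • f = x 1
    rw [hf, he]
    abel
  · exact hb
  · exact sub_eq_of_eq_add' (eq_add_of_sub_eq hc.symm)

lemma exists_matrixMap_diffOdd_eq {x : Fin 4 → (translationRep k BlockGroup V).V}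
    (hx : matrixMap (diffEven k) _ x = 0) : ∃ y, matrixMap (diffOdd k) _ y = x := by
  rw [matrixMap_diffEven] at hx
  obtain ⟨a, ha⟩ := exists_norm_smul (congrFun hx 0)
  obtain ⟨b, hb⟩ := exists_σ_sub_one_smul (f := (δ p - 1) • a - x 1) (by
    rw [smul_sub, ← mul_smul, ← p_sub_one_mul, mul_smul, ha]
    exact congrFun hx 1)
  obtain ⟨c, hc⟩ := exists_one_add_r_smul (congrFun hx 2)
  obtain ⟨d, hd⟩ := exists_r_sub_one_smul (f := (δ τ - 1) • c - x 3) (by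
    rw [smul_sub, ← mul_smul, ← τ_sub_one_mul_one_add_r, mul_smul, hc]
    exact congrFun hx 3)
  refine ⟨![a, b, c, d], (matrixMap_diffOdd _ _).trans ?_⟩
  funext i
  fin_cases i
  · exact ha
  · exact sub_eq_of_eq_add' (eq_add_of_sub_eq hb.symm)
  · exact hc
  · exact sub_eq_of_eq_add' (eq_add_of_sub_eq hd.symm)

lemma exists_matrixMap_diffEven_eq {x : Fin 4 → (translationRep k BlockGroup V).V}
    (hx : matrixMap (diffOdd k) _ x = 0) : ∃ y, matrixMap (diffEven k) _ y = x := by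
  rw [matrixMap_diffOdd] at hx
  obtain ⟨a, ha⟩ := exists_σ_sub_one_smul (congrFun hx 0)
  obtain ⟨b, hb⟩ := exists_norm_smul (f := (δ p - 1) • a - x 1) (by
    rw [smul_sub, ← mul_smul, ← p_sub_one_mul, mul_smul, ha]
    exact congrFun hx 1)
  obtain ⟨c, hc⟩ := exists_r_sub_one_smul (congrFun hx 2)
  obtain ⟨d, hd⟩ := exists_one_add_r_smul (f := (δ τ - 1) • c - x 3) (by
    rw [smul_sub, ← mul_smul, ← τ_sub_one_mul_r_sub_one, mul_smul, hc]
    exact congrFun hx 3)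
  refine ⟨![a, b, c, d], (matrixMap_diffEven _ _).trans ?_⟩
  funext i
  fin_cases i
  · exact ha
  · exact sub_eq_of_eq_add' (eq_add_of_sub_eq hb.symm)
  · exact hc
  · exact sub_eq_of_eq_add' (eq_add_of_sub_eq hd.symm)

end Acyclicity

lemma exists_section_of_matrixMap_diffOne_eq_zero {M : Rep.{0} k BlockGroup} {x : Fin 3 → M.V}
    (hx : matrixMap (diffOne k) M x = 0) :
    ∃ F : BlockGroup →* AffineExtension M,
      F σ = affine (x 0) σ ∧ F r = affine (x 1) r ∧ F τ = affine (x 2) τ := by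
  rw [matrixMap_diffOne] at hx
  have hσ : norm k • x 0 = 0 := congrFun hx 0
  have hr : (1 + δ r) • x 1 = 0 := congrFun hx 1
  have hτr : (δ τ - 1) • x 1 - (δ r - 1) • x 2 = 0 := congrFun hx 2
  have hτσ : δ σ⁻¹ • x 1 + (δ (σ⁻¹ * r) - 1) • x 2 - (δ σ⁻¹ + δ τ) • x 0 = 0 := congrFun hx 3
  refine exists_hom_of_relations ?_ ?_ ?_ ?_
  · rw [affine_pow, ← norm, hσ, σ_pow_four]
    rfl
  · rw [add_smul, one_smul] at hr
    rw [affine_mul_affine, hr, r_mul_r]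
    rfl
  · rw [sub_smul, sub_smul, one_smul, one_smul] at hτr
    rw [affine_mul_affine, affine_mul_affine, τ_mul_r]
    congr 1
    rw [← sub_eq_zero, ← hτr]
    abel
  · rw [mul_assoc, eq_inv_mul_iff_mul_eq, affine_mul_affine, affine_mul_affine, affine_mul_affine,
      τ_mul_σ, mul_assoc, mul_inv_cancel_left]
    congr 1
    have σ_smul_hτσ := congrArg (δ σ • ·) hτσ
    simp only [smul_sub, smul_add, sub_smul, add_smul, ← mul_smul, ← map_mul, one_smul, smul_zero,
      mul_inv_cancel, mul_inv_cancel_left, map_one] at σ_smul_hτσ ⊢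
    rw [eq_comm, ← sub_eq_zero, ← σ_smul_hτσ]
    abel

lemma exists_matrixMap_diffZero_eq {V : Type} [AddCommGroup V] [Module k V]
    {x : Fin 3 → (translationRep k BlockGroup V).V} (hx : matrixMap (diffOne k) _ x = 0) :
    ∃ y, matrixMap (diffZero k) _ y = x := by
  obtain ⟨F, Fσ, Fr, Fτ⟩ := exists_section_of_matrixMap_diffOne_eq_zero hx
  have hF : SemidirectProduct.rightHom.comp F = MonoidHom.id BlockGroup := by
    refine MonoidHom.eq_of_eqOn_dense closure_σ_τ ?_
    rintro g (rfl | rfl)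
    · exact congrArg SemidirectProduct.right Fσ
    · exact congrArg SemidirectProduct.right Fτ
  obtain ⟨e, he⟩ := exists_left_eq_of_section F (DFunLike.congr_fun hF)
  refine ⟨![e], (matrixMap_diffZero _ _).trans ?_⟩
  funext i
  fin_cases i
  · exact (he σ).symm.trans (congrArg SemidirectProduct.left Fσ)
  · exact (he r).symm.trans (congrArg SemidirectProduct.left Fr)
  · exact (he τ).symm.trans (congrArg SemidirectProduct.left Fτ)

variable (k) in
/-- The functor `M ↦ Hom(F, M)` for the free resolution `F` with differentials `diff`. -/
noncomputable abbrev resolutionFunctor :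
    Rep.{0} k BlockGroup ⥤ CochainComplex (ModuleCat.{0} k) ℕ :=
  matrixFunctor (diff k) (diff_mul_diff k)

lemma resolutionFunctor_d_apply (M : Rep.{0} k BlockGroup) (n : ℕ) (x : Fin (rank n) → M.V) :
    ((resolutionFunctor k).obj M).d n (n + 1) x = matrixMap (diff k n) M x :=
  matrixComplex_d_apply (diff k) (diff_mul_diff k) M n x

lemma exists_matrixMap_diff_eq {V : Type} [AddCommGroup V] [Module k V] : ∀ (n : ℕ)
    {x : Fin (rank (n + 1)) → (translationRep k BlockGroup V).V}
    (_ : matrixMap (diff k (n + 1)) _ x = 0), ∃ y, matrixMap (diff k n) _ y = x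
  | 0, _, hx => exists_matrixMap_diffZero_eq hx
  | 1, _, hx => exists_matrixMap_diffOne_eq hx
  | 2, _, hx => exists_matrixMap_diffTwo_eq hx
  | n + 3, _, hx => by
    rcases Nat.even_or_odd (n + 3) with hn | hn
    · rw [diff_of_odd k hn.add_one] at hx
      rw [diff_of_even k hn]
      exact exists_matrixMap_diffEven_eq hx
    · rw [diff_of_even k hn.add_one] at hx
      rw [diff_of_odd k hn]
      exact exists_matrixMap_diffOdd_eq hx

lemma isZero_homology_resolutionFunctor_translationRep (V : Type) [AddCommGroup V] [Module k V]
    (n : ℕ) : IsZero (((resolutionFunctor k).obj (translationRep k BlockGroup V)).homology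
      (n + 1)) := by
  refine (isZero_homology_succ_iff _).2 fun x hx => ?_
  obtain ⟨y, hy⟩ := exists_matrixMap_diff_eq n ((resolutionFunctor_d_apply _ _ x).symm.trans hx)
  exact ⟨y, (resolutionFunctor_d_apply _ _ y).trans hy⟩

lemma matrixMap_diffZero_eq_zero_iff (M : Rep.{0} k BlockGroup) (x : Fin 1 → M.V) :
    matrixMap (diffZero k) M x = 0 ↔ ∀ g, M.ρ g (x 0) = x 0 := by
  rw [matrixMap_diffZero]
  simp only [of_sub_one_smul]
  constructor
  · intro hx g
    have hg : g ∈ Subgroup.closure {σ, τ} := closure_σ_τ ▸ Subgroup.mem_top g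
    induction hg using Subgroup.closure_induction with
    | mem g hg =>
      rcases hg with rfl | rfl
      · exact sub_eq_zero.1 (congrFun hx 0)
      · exact sub_eq_zero.1 (congrFun hx 2)
    | one => rw [map_one, Module.End.one_apply]
    | mul g h _ _ hg hh => rw [map_mul, Module.End.mul_apply, hh, hg]
    | inv g _ hg => exact (congrArg _ hg.symm).trans (M.ρ.inv_self_apply g (x 0))
  · intro hx
    simp [hx]

/-- Invariants of `M`, as elements of `Hom(F₀, M)` for the free module `F₀` of rank one. -/
noncomputable def invariantsToResolution (M : Rep.{0} k BlockGroup) :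
    (Rep.invariantsFunctor k BlockGroup).obj M ⟶ ((resolutionFunctor k).obj M).X 0 :=
  ModuleCat.ofHom
    { toFun m _ := m.1
      map_add' _ _ := rfl
      map_smul' _ _ := rfl }

lemma resolutionFunctor_d_zero_eq_zero_iff (M : Rep.{0} k BlockGroup)
    (x : ((resolutionFunctor k).obj M).X 0) :
    ((resolutionFunctor k).obj M).d 0 1 x = 0 ↔ ∃ m, invariantsToResolution M m = x := by
  refine (Eq.congr_left (resolutionFunctor_d_apply M 0 x)).trans
    ((matrixMap_diffZero_eq_zero_iff M x).trans ⟨fun hx => ?_, ?_⟩)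
  · exact ⟨⟨x (0 : Fin 1), hx⟩, funext fun i => congrArg x (Subsingleton.elim (α := Fin 1) _ _)⟩
  · rintro ⟨m, rfl⟩
    exact m.2

theorem nonempty_groupCohomology_iso_resolution (M : Rep.{0} k BlockGroup) (n : ℕ) :
    Nonempty (groupCohomology M n ≅ ((resolutionFunctor k).obj M).homology n) :=
  nonempty_groupCohomology_iso invariantsToResolution
    (fun _ hS => shortExact_map_matrixFunctor _ _ hS)
    (fun V _ _ n => isZero_homology_resolutionFunctor_translationRep V n) (fun _ => rfl)
    (fun _ _ _ h => Subtype.ext (congrFun h (0 : Fin 1))) resolutionFunctor_d_zero_eq_zero_iff M n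

variable {Q : Type*} [AddCommGroup Q] (M : Rep.{0} k BlockGroup)

theorem nonempty_groupCohomology_succ_addEquiv (n : ℕ) (φ : (Fin (rank (n + 1)) → M.V) →+ Q)
    (surj : ∀ q, ∃ x, matrixMap (diff k (n + 1)) M x = 0 ∧ φ x = q)
    (ker : ∀ x, matrixMap (diff k (n + 1)) M x = 0 →
      (φ x = 0 ↔ ∃ y, matrixMap (diff k n) M y = x)) :
    Nonempty (groupCohomology M (n + 1) ≃+ Q) := by
  obtain ⟨e⟩ := nonempty_groupCohomology_iso_resolution M (n + 1)
  refine (nonempty_homology_addEquiv ((resolutionFunctor k).obj M) (CochainComplex.prev_nat_succ n)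
    (φ.comp (Submodule.subtype _).toAddMonoidHom) (fun q => ?_) fun x => ?_).map
      e.toLinearEquiv.toAddEquiv.trans
  · obtain ⟨x, hx, rfl⟩ := surj q
    exact ⟨⟨x, (resolutionFunctor_d_apply M _ x).trans hx⟩, rfl⟩
  · refine (ker x.1 ((resolutionFunctor_d_apply M _ x.1).symm.trans x.2)).trans ?_
    exact exists_congr fun y => Eq.congr_left (resolutionFunctor_d_apply M n y).symm

theorem nonempty_groupCohomology_zero_addEquiv (φ : (Fin 1 → M.V) →+ Q)
    (surj : ∀ q, ∃ x, matrixMap (diffZero k) M x = 0 ∧ φ x = q)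
    (ker : ∀ x, matrixMap (diffZero k) M x = 0 → φ x = 0 → x = 0) :
    Nonempty (groupCohomology M 0 ≃+ Q) := by
  obtain ⟨e⟩ := nonempty_groupCohomology_iso_resolution M 0
  refine (nonempty_homology_addEquiv ((resolutionFunctor k).obj M) (CochainComplex.prev_nat_zero)
    (φ.comp (Submodule.subtype _).toAddMonoidHom) (fun q => ?_) fun x => ?_).map
      e.toLinearEquiv.toAddEquiv.trans
  · obtain ⟨x, hx, rfl⟩ := surj q
    exact ⟨⟨x, (resolutionFunctor_d_apply M 0 x).trans hx⟩, rfl⟩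
  · have hx : matrixMap (diffZero k) M x.1 = 0 :=
      (resolutionFunctor_d_apply M 0 x.1).symm.trans x.2
    rw [HomologicalComplex.shape _ 0 0 (by simp)]
    refine ⟨fun h => ⟨0, (ker x.1 hx h).symm⟩, ?_⟩
    rintro ⟨y, hy⟩
    exact (congrArg φ hy.symm).trans (map_zero φ)

end BlockGroup
end BlockResolution

section BlockCohomology

attribute [local instance] groupRingModule

namespace BlockGroup

open Crystal Matrix

local notation "δ" => MonoidAlgebra.of ℤ BlockGroup

section Sign

variable {ψ : Multiplicative (ZMod 4) →* ℤˣ}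

local notation "ε" => ((ψ (Multiplicative.ofAdd 1) : ℤˣ) : ℤ)

variable (m : (signRep holBlock holBlock_pow ψ).V)

variable (ψ) in
lemma sign_pow_two : ε ^ 2 = 1 := by
  rw [← Units.val_pow_eq_pow_val, Int.units_sq, Units.val_one]

lemma of_smul_eq_sign_smul {g : BlockGroup} (hg : g.right = .ofAdd 1 ∨ g.right = .ofAdd 3) :
    δ g • m = ε • m := by
  have ψ_eq : ψ g.right = ψ (.ofAdd 1) := by
    rcases hg with hg | hg
    · rw [hg]
    · rw [hg, show Multiplicative.ofAdd (3 : ZMod 4) = .ofAdd 1 ^ 2 * .ofAdd 1 from rfl, map_mul,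
        map_pow, Int.units_sq, one_mul]
  rw [← ψ_eq]
  exact of_smul _ g m

lemma of_smul_eq_self {g : BlockGroup} (hg : g.right = .ofAdd 0 ∨ g.right = .ofAdd 2) :
    δ g • m = m := by
  have ψ_eq : ψ g.right = 1 := by
    rcases hg with hg | hg
    · rw [hg, ofAdd_zero, map_one]
    · rw [hg, show Multiplicative.ofAdd (2 : ZMod 4) = .ofAdd 1 ^ 2 from rfl, map_pow,
        Int.units_sq]
  rw [of_smul]
  change ((ψ g.right : ℤˣ) : ℤ) • m = m
  rw [ψ_eq, Units.val_one, one_smul]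

lemma of_σ_smul : δ σ • m = ε • m := of_smul_eq_sign_smul m (by decide)
lemma of_τ_smul : δ τ • m = ε • m := of_smul_eq_sign_smul m (by decide)
lemma of_r_smul : δ r • m = m := of_smul_eq_self m (by decide)
lemma of_s_smul : δ s • m = m := of_smul_eq_self m (by decide)
lemma of_p_smul : δ p • m = m := of_smul_eq_self m (by decide)
lemma of_inv_σ_smul : δ σ⁻¹ • m = ε • m := of_smul_eq_sign_smul m (by decide)
lemma of_inv_σ_mul_r_smul : δ (σ⁻¹ * r) • m = ε • m := of_smul_eq_sign_smul m (by decide)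

lemma norm_smul : norm ℤ • m = (2 + 2 * ε) • m := by
  have (i : ℕ) : δ σ ^ i • m = ε ^ i • m := by
    induction i with
    | zero => rw [pow_zero, pow_zero, one_smul, one_smul]
    | succ i ih => rw [pow_succ', pow_succ', mul_smul, ih, of_σ_smul, smul_smul]
  rw [norm, Finset.sum_smul]
  simp only [this, Finset.sum_range_succ, Finset.sum_range_zero, pow_succ ε 2, sign_pow_two]
  rw [zero_add, pow_zero, pow_one, one_mul, ← add_smul, ← add_smul, ← add_smul]
  congr 1
  ring

lemma matrixMap_diffZero_signRep (x : Fin 1 → (signRep holBlock holBlock_pow ψ).V) :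
    matrixMap (diffZero ℤ) (signRep holBlock holBlock_pow ψ) x =
      ![(ε - 1) • x 0, 0, (ε - 1) • x 0] := by
  rw [matrixMap_diffZero]
  simp only [sub_smul, one_smul, of_σ_smul, of_r_smul, of_τ_smul, sub_self]

lemma matrixMap_diffOne_signRep (x : Fin 3 → (signRep holBlock holBlock_pow ψ).V) :
    matrixMap (diffOne ℤ) (signRep holBlock holBlock_pow ψ) x =
      ![(2 + 2 * ε) • x 0, (2 : ℤ) • x 1, (ε - 1) • x 1,
        ε • x 1 + (ε - 1) • x 2 - (2 * ε) • x 0] := by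
  rw [matrixMap_diffOne]
  simp only [sub_smul, add_smul, one_smul, norm_smul, of_r_smul, of_τ_smul, sub_self, sub_zero,
    of_inv_σ_smul, of_inv_σ_mul_r_smul, two_mul, two_smul]

lemma matrixMap_diffTwo_signRep (x : Fin 4 → (signRep holBlock holBlock_pow ψ).V) :
    matrixMap (diffTwo ℤ) (signRep holBlock holBlock_pow ψ) x =
      ![(ε - 1) • x 0, -((2 + 2 * ε) • x 2), 0, (ε - 1) • x 1 - (2 : ℤ) • x 2] := by
  rw [matrixMap_diffTwo]
  simp only [sub_smul, add_smul, one_smul, norm_smul, of_r_smul, of_τ_smul, of_σ_smul, of_p_smul,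
    of_s_smul, sub_self, zero_sub, smul_zero, add_zero, two_smul]

lemma matrixMap_diffOdd_signRep (x : Fin 4 → (signRep holBlock holBlock_pow ψ).V) :
    matrixMap (diffOdd ℤ) (signRep holBlock holBlock_pow ψ) x =
      ![(2 + 2 * ε) • x 0, -((ε - 1) • x 1), (2 : ℤ) • x 2, (ε - 1) • x 2] := by
  rw [matrixMap_diffOdd]
  simp only [sub_smul, add_smul, one_smul, norm_smul, of_r_smul, of_τ_smul, of_σ_smul, of_p_smul,
    sub_self, sub_zero, zero_sub, two_smul]

lemma matrixMap_diffEven_signRep (x : Fin 4 → (signRep holBlock holBlock_pow ψ).V) :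
    matrixMap (diffEven ℤ) (signRep holBlock holBlock_pow ψ) x =
      ![(ε - 1) • x 0, -((2 + 2 * ε) • x 1), 0, (ε - 1) • x 2 - (2 : ℤ) • x 3] := by
  rw [matrixMap_diffEven]
  simp only [sub_smul, add_smul, one_smul, norm_smul, of_r_smul, of_τ_smul, of_σ_smul, of_p_smul,
    sub_self, zero_sub, two_smul]

end Sign

/-- Coordinates on the homology at the middle of `ℤ^p → ℤ^q → ℤ^r`: the linear functionals with
coefficients `v` and `w` identify `ker d' / im d` with `ℤ/a × ℤ/b`, where `ℤ/0 = ℤ`. -/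
structure IsHomologyCoordinates {p q r : ℕ} (d : (Fin p → ℤ) → Fin q → ℤ)
    (d' : (Fin q → ℤ) → Fin r → ℤ) (a b : ℕ) (v w : Fin q → ℤ) : Prop where
  surjective : ∀ s t, ∃ x, d' x = 0 ∧ (a : ℤ) ∣ v ⬝ᵥ x - s ∧ (b : ℤ) ∣ w ⬝ᵥ x - t
  dvd : ∀ y, (a : ℤ) ∣ v ⬝ᵥ d y ∧ (b : ℤ) ∣ w ⬝ᵥ d y
  exact : ∀ x, d' x = 0 → ∀ s t, v ⬝ᵥ x = a * s → w ⬝ᵥ x = b * t → ∃ y, d y = x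

theorem nonempty_groupCohomology_signRep_succ_addEquiv_zmod
    {ψ : Multiplicative (ZMod 4) →* ℤˣ} {n : ℕ}
    {d : (Fin (rank n) → ℤ) → Fin (rank (n + 1)) → ℤ}
    {d' : (Fin (rank (n + 1)) → ℤ) → Fin (rank (n + 2)) → ℤ}
    (hd : ∀ x, matrixMap (diff ℤ n) (signRep holBlock holBlock_pow ψ) x = d x)
    (hd' : ∀ x, matrixMap (diff ℤ (n + 1)) (signRep holBlock holBlock_pow ψ) x = d' x)
    {a b : ℕ} {v w : Fin (rank (n + 1)) → ℤ} (h : IsHomologyCoordinates d d' a b v w) :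
    Nonempty (groupCohomology (signRep holBlock holBlock_pow ψ) (n + 1) ≃+ ZMod a × ZMod b) := by
  let φ : (Fin (rank (n + 1)) → ℤ) →+ ZMod a × ZMod b :=
    AddMonoidHom.mk' (fun x => ((v ⬝ᵥ x : ℤ), (w ⬝ᵥ x : ℤ))) fun x y => by
      rw [dotProduct_add, dotProduct_add, Int.cast_add, Int.cast_add, Prod.mk_add_mk]
  have φ_eq_zero_iff (x) : φ x = 0 ↔ (a : ℤ) ∣ v ⬝ᵥ x ∧ (b : ℤ) ∣ w ⬝ᵥ x :=
    Prod.ext_iff.trans (and_congr (ZMod.intCast_zmod_eq_zero_iff_dvd _ _)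
      (ZMod.intCast_zmod_eq_zero_iff_dvd _ _))
  refine nonempty_groupCohomology_succ_addEquiv _ n φ (fun q => ?_) fun x hx =>
    (φ_eq_zero_iff x).trans ⟨?_, ?_⟩
  · obtain ⟨s, hs⟩ := ZMod.intCast_surjective q.1
    obtain ⟨t, ht⟩ := ZMod.intCast_surjective q.2
    obtain ⟨x, hx, hxs, hxt⟩ := h.surjective s t
    refine ⟨x, (hd' x).trans hx, Prod.ext (Eq.trans ?_ hs) (Eq.trans ?_ ht)⟩
    · exact ((ZMod.intCast_eq_intCast_iff_dvd_sub _ _ _).2 hxs).symm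
    · exact ((ZMod.intCast_eq_intCast_iff_dvd_sub _ _ _).2 hxt).symm
  · rintro ⟨⟨s, hs⟩, t, ht⟩
    obtain ⟨y, hy⟩ := h.exact x ((hd' x).symm.trans hx) s t hs ht
    exact ⟨y, (hd y).trans hy⟩
  · rintro ⟨y, rfl⟩
    rw [hd]
    exact h.dvd y

section Integral

variable {ψ : Multiplicative (ZMod 4) →* ℤˣ} {ε : ℤ}

lemma matrixMap_diffZero_int (hε : ψ (Multiplicative.ofAdd 1) = ε) (x : Fin 1 → ℤ) :
    matrixMap (diffZero ℤ) (signRep holBlock holBlock_pow ψ) x =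
      (![(ε - 1) * x 0, 0, (ε - 1) * x 0] : Fin 3 → ℤ) := by
  subst hε
  exact matrixMap_diffZero_signRep x

lemma matrixMap_diffOne_int (hε : ψ (Multiplicative.ofAdd 1) = ε) (x : Fin 3 → ℤ) :
    matrixMap (diffOne ℤ) (signRep holBlock holBlock_pow ψ) x =
      (![(2 + 2 * ε) * x 0, 2 * x 1, (ε - 1) * x 1, ε * x 1 + (ε - 1) * x 2 - 2 * ε * x 0] :
        Fin 4 → ℤ) := by
  subst hε
  exact matrixMap_diffOne_signRep x

lemma matrixMap_diffTwo_int (hε : ψ (Multiplicative.ofAdd 1) = ε) (x : Fin 4 → ℤ) :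
    matrixMap (diffTwo ℤ) (signRep holBlock holBlock_pow ψ) x =
      (![(ε - 1) * x 0, -((2 + 2 * ε) * x 2), 0, (ε - 1) * x 1 - 2 * x 2] : Fin 4 → ℤ) := by
  subst hε
  exact matrixMap_diffTwo_signRep x

lemma matrixMap_diff_of_odd_int {n : ℕ} (hn : Odd (n + 3))
    (hε : ψ (Multiplicative.ofAdd 1) = ε) (x : Fin 4 → ℤ) :
    matrixMap (diff ℤ (n + 3)) (signRep holBlock holBlock_pow ψ) x =
      (![(2 + 2 * ε) * x 0, -((ε - 1) * x 1), 2 * x 2, (ε - 1) * x 2] : Fin 4 → ℤ) := by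
  subst hε
  rw [diff_of_odd ℤ hn]
  exact matrixMap_diffOdd_signRep x

lemma matrixMap_diff_of_even_int {n : ℕ} (hn : Even (n + 3))
    (hε : ψ (Multiplicative.ofAdd 1) = ε) (x : Fin 4 → ℤ) :
    matrixMap (diff ℤ (n + 3)) (signRep holBlock holBlock_pow ψ) x =
      (![(ε - 1) * x 0, -((2 + 2 * ε) * x 1), 0, (ε - 1) * x 2 - 2 * x 3] : Fin 4 → ℤ) := by
  subst hε
  rw [diff_of_even ℤ hn]
  exact matrixMap_diffEven_signRep x

end Integral

lemma vecThree_eq_iff {a b c : ℤ} {x : Fin 3 → ℤ} :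
    ![a, b, c] = x ↔ a = x 0 ∧ b = x 1 ∧ c = x 2 := by
  simp [funext_iff, Fin.forall_fin_succ]

lemma vecFour_eq_iff {a b c d : ℤ} {x : Fin 4 → ℤ} :
    ![a, b, c, d] = x ↔ a = x 0 ∧ b = x 1 ∧ c = x 2 ∧ d = x 3 := by
  simp [funext_iff, Fin.forall_fin_succ]

local notation "ℤ₊" => signRep holBlock holBlock_pow 1
local notation "ℤ₋" => signRep holBlock holBlock_pow (zmodHom 4 (-1) rfl)

theorem nonempty_groupCohomology_trivial_zero_addEquiv :
    Nonempty (groupCohomology ℤ₊ 0 ≃+ ℤ) := by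
  refine nonempty_groupCohomology_zero_addEquiv _ (Pi.evalAddMonoidHom (fun _ => ℤ) 0)
    (fun s => ⟨fun _ => s, ?_, rfl⟩) fun x _ hx => ?_
  · refine (matrixMap_diffZero_int (ε := 1) rfl _).trans (?_ : _ = (0 : Fin 3 → ℤ))
    simp
  · exact funext fun i => (Fin.fin_one_eq_zero i ▸ hx : x i = 0)

theorem nonempty_groupCohomology_sign_zero_addEquiv :
    Nonempty (groupCohomology ℤ₋ 0 ≃+ PUnit.{1}) := by
  refine nonempty_groupCohomology_zero_addEquiv _ 0
    (fun s => ⟨0, map_zero _, rfl⟩) fun x hx _ => ?_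
  have eq_zero (m : ℤ) (hm : (-1 - 1) * m = 0) : m = 0 := by omega
  have hx : x 0 = 0 :=
    eq_zero _ (congrFun ((matrixMap_diffZero_int (ε := -1) rfl x).symm.trans hx) 0)
  exact funext fun i => (Fin.fin_one_eq_zero i ▸ hx : x i = 0)

theorem nonempty_groupCohomology_trivial_one_addEquiv :
    Nonempty (groupCohomology ℤ₊ 1 ≃+ ℤ) := by
  refine (nonempty_groupCohomology_signRep_succ_addEquiv_zmod (n := 0)
    (matrixMap_diffZero_int (ε := 1) rfl) (matrixMap_diffOne_int (ε := 1) rfl)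
    (a := 0) (b := 1) (v := ![0, 0, 1]) (w := 0)
    (?_ : IsHomologyCoordinates (p := 1) (q := 3) (r := 4) _ _ _ _ _ _))
      |>.map (·.trans AddEquiv.prodUnique)
  refine ⟨fun s t => ⟨![0, 0, s], ?_⟩, fun y => ?_,
    fun x hx s t hs ht => ⟨0, ?_⟩⟩ <;>
  simp only [vecThree_eq_iff, vecFour_eq_iff, dotProduct, Fin.sum_univ_three, cons_val,
    Pi.zero_apply, Nat.cast_zero, zero_dvd_iff] at * <;>
  omega

theorem nonempty_groupCohomology_trivial_two_addEquiv :
    Nonempty (groupCohomology ℤ₊ 2 ≃+ ℤ × ZMod 4) := by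
  refine nonempty_groupCohomology_signRep_succ_addEquiv_zmod (n := 1)
    (matrixMap_diffOne_int (ε := 1) rfl) (matrixMap_diffTwo_int (ε := 1) rfl)
    (a := 0) (b := 4) (v := ![1, -1, 0, 2]) (w := ![0, 1, 0, 2])
    (?_ : IsHomologyCoordinates (p := 3) (q := 4) (r := 4) _ _ _ _ _ _)
  refine ⟨fun s t => ⟨![s + t, t, 0, 0], ?_⟩, fun y => ?_,
    fun x hx s t hs ht => ⟨![t - x 3, 2 * t - x 3, 0], ?_⟩⟩ <;>
  simp only [vecFour_eq_iff, dotProduct, Fin.sum_univ_four, cons_val,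
    Pi.zero_apply, true_and, Nat.cast_zero, zero_dvd_iff] at * <;>
  omega

theorem nonempty_groupCohomology_trivial_three_addEquiv :
    Nonempty (groupCohomology ℤ₊ 3 ≃+ ℤ × ZMod 2) := by
  refine nonempty_groupCohomology_signRep_succ_addEquiv_zmod (n := 2)
    (matrixMap_diffTwo_int (ε := 1) rfl)
    (matrixMap_diff_of_odd_int (n := 0) (by decide) (ε := 1) rfl)
    (a := 0) (b := 2) (v := ![0, 1, 0, -2]) (w := ![0, 0, 0, 1])
    (?_ : IsHomologyCoordinates (p := 4) (q := 4) (r := 4) _ _ _ _ _ _)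
  refine ⟨fun s t => ⟨![0, s + 2 * t, 0, t], ?_⟩, fun y => ?_,
    fun x hx s t hs ht => ⟨![0, 0, -t, 0], ?_⟩⟩ <;>
  simp only [vecFour_eq_iff, dotProduct, Fin.sum_univ_four, cons_val,
    Pi.zero_apply, Nat.cast_zero, zero_dvd_iff] at * <;>
  omega

theorem nonempty_groupCohomology_sign_one_addEquiv :
    Nonempty (groupCohomology ℤ₋ 1 ≃+ ZMod 2) := by
  refine (nonempty_groupCohomology_signRep_succ_addEquiv_zmod (n := 0)
    (matrixMap_diffZero_int (ε := -1) rfl) (matrixMap_diffOne_int (ε := -1) rfl)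
    (a := 2) (b := 1) (v := ![1, 0, 0]) (w := 0)
    (?_ : IsHomologyCoordinates (p := 1) (q := 3) (r := 4) _ _ _ _ _ _))
      |>.map (·.trans AddEquiv.prodUnique)
  refine ⟨fun s t => ⟨![s, 0, s], ?_⟩, fun y => ?_,
    fun x hx s t hs ht => ⟨![-s], ?_⟩⟩ <;>
  simp only [vecThree_eq_iff, vecFour_eq_iff, dotProduct, Fin.sum_univ_three, cons_val,
    Pi.zero_apply] at * <;>
  omega

theorem nonempty_groupCohomology_sign_two_addEquiv :
    Nonempty (groupCohomology ℤ₋ 2 ≃+ ZMod 4) := by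
  refine (nonempty_groupCohomology_signRep_succ_addEquiv_zmod (n := 1)
    (matrixMap_diffOne_int (ε := -1) rfl) (matrixMap_diffTwo_int (ε := -1) rfl)
    (a := 4) (b := 1) (v := ![0, 1, 0, 2]) (w := 0)
    (?_ : IsHomologyCoordinates (p := 3) (q := 4) (r := 4) _ _ _ _ _ _))
      |>.map (·.trans AddEquiv.prodUnique)
  refine ⟨fun s t => ⟨![0, s, -s, 0], ?_⟩, fun y => ?_,
    fun x hx s t hs ht => ⟨![s, 2 * s - x 3, 0], ?_⟩⟩ <;>
  simp only [vecFour_eq_iff, dotProduct, Fin.sum_univ_four, cons_val,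
    Pi.zero_apply, true_and] at * <;>
  omega

theorem nonempty_groupCohomology_sign_three_addEquiv :
    Nonempty (groupCohomology ℤ₋ 3 ≃+ ZMod 2 × ZMod 2) := by
  refine nonempty_groupCohomology_signRep_succ_addEquiv_zmod (n := 2)
    (matrixMap_diffTwo_int (ε := -1) rfl)
    (matrixMap_diff_of_odd_int (n := 0) (by decide) (ε := -1) rfl)
    (a := 2) (b := 2) (v := ![1, 0, 0, 0]) (w := ![0, 0, 0, 1])
    (?_ : IsHomologyCoordinates (p := 4) (q := 4) (r := 4) _ _ _ _ _ _)
  refine ⟨fun s t => ⟨![s, 0, 0, t], ?_⟩, fun y => ?_,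
    fun x hx s t hs ht => ⟨![-s, -t, 0, 0], ?_⟩⟩ <;>
  simp only [vecFour_eq_iff, dotProduct, Fin.sum_univ_four, cons_val, Pi.zero_apply] at * <;>
  omega

theorem nonempty_groupCohomology_trivial_add_four_addEquiv (n : ℕ) :
    Nonempty (groupCohomology ℤ₊ (n + 4) ≃+ ZMod 4 × ZMod 2) := by
  rcases Nat.even_or_odd (n + 3) with hn | hn
  · refine nonempty_groupCohomology_signRep_succ_addEquiv_zmod (n := n + 3)
      (matrixMap_diff_of_even_int hn (ε := 1) rfl)
      (matrixMap_diff_of_odd_int hn.add_one (ε := 1) rfl)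
      (a := 4) (b := 2) (v := ![0, 1, 0, 0]) (w := ![0, 0, 0, 1])
      (?_ : IsHomologyCoordinates (p := 4) (q := 4) (r := 4) _ _ _ _ _ _)
    refine ⟨fun s t => ⟨![0, s, 0, t], ?_⟩, fun y => ?_,
      fun x hx s t hs ht => ⟨![0, -s, 0, -t], ?_⟩⟩ <;>
    simp only [vecFour_eq_iff, dotProduct, Fin.sum_univ_four, cons_val, Pi.zero_apply] at * <;>
    omega
  · refine nonempty_groupCohomology_signRep_succ_addEquiv_zmod (n := n + 3)
      (matrixMap_diff_of_odd_int hn (ε := 1) rfl)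
      (matrixMap_diff_of_even_int hn.add_one (ε := 1) rfl)
      (a := 4) (b := 2) (v := ![1, 0, 0, 0]) (w := ![0, 0, 1, 0])
      (?_ : IsHomologyCoordinates (p := 4) (q := 4) (r := 4) _ _ _ _ _ _)
    refine ⟨fun s t => ⟨![s, 0, t, 0], ?_⟩, fun y => ?_,
      fun x hx s t hs ht => ⟨![s, 0, t, 0], ?_⟩⟩ <;>
    simp only [vecFour_eq_iff, dotProduct, Fin.sum_univ_four, cons_val,
      Pi.zero_apply, true_and] at * <;>
    omega

theorem nonempty_groupCohomology_sign_add_four_addEquiv (n : ℕ) :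
    Nonempty (groupCohomology ℤ₋ (n + 4) ≃+ ZMod 2 × ZMod 2) := by
  rcases Nat.even_or_odd (n + 3) with hn | hn
  · refine nonempty_groupCohomology_signRep_succ_addEquiv_zmod (n := n + 3)
      (matrixMap_diff_of_even_int hn (ε := -1) rfl)
      (matrixMap_diff_of_odd_int hn.add_one (ε := -1) rfl)
      (a := 2) (b := 2) (v := ![1, 0, 0, 0]) (w := ![0, 0, 0, 1])
      (?_ : IsHomologyCoordinates (p := 4) (q := 4) (r := 4) _ _ _ _ _ _)
    refine ⟨fun s t => ⟨![s, 0, 0, t], ?_⟩, fun y => ?_,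
      fun x hx s t hs ht => ⟨![-s, 0, -t, 0], ?_⟩⟩ <;>
    simp only [vecFour_eq_iff, dotProduct, Fin.sum_univ_four, cons_val, Pi.zero_apply] at * <;>
    omega
  · refine nonempty_groupCohomology_signRep_succ_addEquiv_zmod (n := n + 3)
      (matrixMap_diff_of_odd_int hn (ε := -1) rfl)
      (matrixMap_diff_of_even_int hn.add_one (ε := -1) rfl)
      (a := 2) (b := 2) (v := ![0, 1, 0, 0]) (w := ![0, 0, 1, 0])
      (?_ : IsHomologyCoordinates (p := 4) (q := 4) (r := 4) _ _ _ _ _ _)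
    refine ⟨fun s t => ⟨![0, s, t, -t], ?_⟩, fun y => ?_,
      fun x hx s t hs ht => ⟨![0, s, t, 0], ?_⟩⟩ <;>
    simp only [vecFour_eq_iff, dotProduct, Fin.sum_univ_four, cons_val,
      Pi.zero_apply, true_and] at * <;>
    omega

end BlockGroup
end BlockCohomology

section Assembly

open Crystal Matrix BlockGroup

local notation "sgn" => (zmodHom 4 (-1) rfl : Multiplicative (ZMod 4) →* ℤˣ)
local notation "ℤ₊" => signRep holBlock holBlock_pow 1
local notation "ℤ₋" => signRep holBlock holBlock_pow sgn

/-- The lower right `4 × 4` block of `holM`, itself block diagonal with blocks `-1` and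
`holBlock`. -/
def holBlockFour : Matrix (Fin 4) (Fin 4) ℤ :=
  !![-1, 0, 0, 0; 0, 0, 0, -1; 0, 1, 0, 1; 0, 0, -1, 1]

lemma holBlockFour_pow : holBlockFour ^ 4 = 1 := by decide

lemma holM_mulVec_vecCons (a : ℤ) (v : Fin 4 → ℤ) :
    holM *ᵥ vecCons a v =
      vecCons ((sgn (Multiplicative.ofAdd 1) : ℤˣ) * a) (holBlockFour *ᵥ v) := by
  change _ = vecCons (-1 * a) (holBlockFour *ᵥ v)
  funext i
  fin_cases i <;>
    simp [holM, holBlockFour, mulVec, dotProduct, Fin.sum_univ_succ]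

lemma holBlockFour_mulVec_vecCons (a : ℤ) (v : Fin 3 → ℤ) :
    holBlockFour *ᵥ vecCons a v =
      vecCons ((sgn (Multiplicative.ofAdd 1) : ℤˣ) * a) (holBlock *ᵥ v) := by
  change _ = vecCons (-1 * a) (holBlock *ᵥ v)
  funext i
  fin_cases i <;>
    simp [holBlock, holBlockFour, mulVec, dotProduct, Fin.sum_univ_succ]

lemma sign_mul_sign : sgn * sgn = 1 := by
  decide

lemma nonempty_H_addEquiv_signRep (i : ℕ) :
    Nonempty (H i ≃+ groupCohomology (signRep holM holM_pow 1) i) := by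
  refine ⟨((groupCohomology.functor ℤ _ i).mapIso (Rep.mkIso
    { LinearEquiv.refl ℤ ℤ with isIntertwining' := fun g => ?_ })).toLinearEquiv.toAddEquiv⟩
  exact LinearMap.ext fun m => (one_smul ℤ m).symm

theorem nonempty_H_one_addEquiv_prod {A B : Type*} [AddCommGroup A] [AddCommGroup B]
    (hA : Nonempty (groupCohomology ℤ₊ 1 ≃+ A)) (hB : Nonempty (groupCohomology ℤ₋ 0 ≃+ B)) :
    Nonempty (H 1 ≃+ (A × B) × B) := by
  obtain ⟨e⟩ := nonempty_H_addEquiv_signRep 1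
  obtain ⟨e₅⟩ := nonempty_groupCohomology_signRep_succ (hq := holM_pow)
    (hq' := holBlockFour_pow) holM_mulVec_vecCons 1 0
  obtain ⟨e₄⟩ := nonempty_groupCohomology_signRep_succ (hq := holBlockFour_pow)
    (hq' := holBlock_pow) holBlockFour_mulVec_vecCons 1 0
  obtain ⟨e₄'⟩ := nonempty_groupCohomology_signRep_zero (hq := holBlockFour_pow)
    (hq' := holBlock_pow) holBlockFour_mulVec_vecCons sgn
  rw [_root_.mul_one] at e₅ e₄
  obtain ⟨⟨eA⟩, ⟨eB⟩⟩ := And.intro hA hB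
  exact ⟨e.trans (e₅.trans ((e₄.trans (eA.prodCongr eB)).prodCongr (e₄'.trans eB)))⟩

theorem nonempty_H_add_two_addEquiv_prod {n : ℕ} {A B C : Type*} [AddCommGroup A]
    [AddCommGroup B] [AddCommGroup C] (hA : Nonempty (groupCohomology ℤ₊ (n + 2) ≃+ A))
    (hB : Nonempty (groupCohomology ℤ₋ (n + 1) ≃+ B))
    (hC : Nonempty (groupCohomology ℤ₊ n ≃+ C)) :
    Nonempty (H (n + 2) ≃+ (A × B) × (B × C)) := by
  obtain ⟨e⟩ := nonempty_H_addEquiv_signRep (n + 2)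
  obtain ⟨e₅⟩ := nonempty_groupCohomology_signRep_succ (hq := holM_pow)
    (hq' := holBlockFour_pow) holM_mulVec_vecCons 1 (n + 1)
  obtain ⟨e₄⟩ := nonempty_groupCohomology_signRep_succ (hq := holBlockFour_pow)
    (hq' := holBlock_pow) holBlockFour_mulVec_vecCons 1 (n + 1)
  obtain ⟨e₄'⟩ := nonempty_groupCohomology_signRep_succ (hq := holBlockFour_pow)
    (hq' := holBlock_pow) holBlockFour_mulVec_vecCons sgn n
  rw [_root_.mul_one] at e₅ e₄
  rw [sign_mul_sign] at e₄'
  obtain ⟨⟨eA⟩, ⟨eB⟩, ⟨eC⟩⟩ := And.intro hA (And.intro hB hC)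
  exact ⟨e.trans (e₅.trans
    ((e₄.trans (eA.prodCongr eB)).prodCongr (e₄'.trans (eB.prodCongr eC))))⟩

theorem nonempty_H_one_addEquiv : Nonempty (H 1 ≃+ ℤ) :=
  (nonempty_H_one_addEquiv_prod nonempty_groupCohomology_trivial_one_addEquiv
    nonempty_groupCohomology_sign_zero_addEquiv).map
      (·.trans (AddEquiv.prodUnique.trans AddEquiv.prodUnique))

theorem nonempty_H_two_addEquiv :
    Nonempty (H 2 ≃+ (Fin 2 → ℤ) × ZMod 4 × (Fin 2 → ZMod 2)) :=
  (nonempty_H_add_two_addEquiv_prod nonempty_groupCohomology_trivial_two_addEquiv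
    nonempty_groupCohomology_sign_one_addEquiv nonempty_groupCohomology_trivial_zero_addEquiv).map
      (·.trans
        { toFun x := (![x.1.1.1, x.2.2], x.1.1.2, ![x.1.2, x.2.1])
          invFun y := (((y.1 0, y.2.1), y.2.2 0), (y.2.2 1, y.1 1))
          left_inv _ := rfl
          right_inv y := Prod.ext (FinVec.etaExpand_eq y.1)
            (Prod.ext rfl (FinVec.etaExpand_eq y.2.2))
          map_add' x y := by simp })

theorem nonempty_H_three_addEquiv :
    Nonempty (H 3 ≃+ (Fin 2 → ℤ) × (Fin 2 → ZMod 4) × ZMod 2) :=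
  (nonempty_H_add_two_addEquiv_prod nonempty_groupCohomology_trivial_three_addEquiv
    nonempty_groupCohomology_sign_two_addEquiv nonempty_groupCohomology_trivial_one_addEquiv).map
      (·.trans
        { toFun x := (![x.1.1.1, x.2.2], ![x.1.2, x.2.1], x.1.1.2)
          invFun y := (((y.1 0, y.2.2), y.2.1 0), (y.2.1 1, y.1 1))
          left_inv _ := rfl
          right_inv y := Prod.ext (FinVec.etaExpand_eq y.1)
            (Prod.ext (FinVec.etaExpand_eq y.2.1) rfl)
          map_add' x y := by simp })

theorem nonempty_H_four_addEquiv :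
    Nonempty (H 4 ≃+ ℤ × (Fin 2 → ZMod 4) × (Fin 5 → ZMod 2)) :=
  (nonempty_H_add_two_addEquiv_prod (nonempty_groupCohomology_trivial_add_four_addEquiv 0)
    nonempty_groupCohomology_sign_three_addEquiv nonempty_groupCohomology_trivial_two_addEquiv).map
      (·.trans
        { toFun x := (x.2.2.1, ![x.1.1.1, x.2.2.2],
            ![x.1.1.2, x.1.2.1, x.1.2.2, x.2.1.1, x.2.1.2])
          invFun y := (((y.2.1 0, y.2.2 0), (y.2.2 1, y.2.2 2)),
            ((y.2.2 3, y.2.2 4), (y.1, y.2.1 1)))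
          left_inv _ := rfl
          right_inv y := Prod.ext rfl
            (Prod.ext (FinVec.etaExpand_eq y.2.1) (FinVec.etaExpand_eq y.2.2))
          map_add' x y := by simp })

theorem nonempty_H_five_addEquiv :
    Nonempty (H 5 ≃+ ℤ × ZMod 4 × (Fin 6 → ZMod 2)) :=
  (nonempty_H_add_two_addEquiv_prod (nonempty_groupCohomology_trivial_add_four_addEquiv 1)
    (nonempty_groupCohomology_sign_add_four_addEquiv 0)
    nonempty_groupCohomology_trivial_three_addEquiv).map
      (·.trans
        { toFun x := (x.2.2.1, x.1.1.1,
            ![x.1.1.2, x.1.2.1, x.1.2.2, x.2.1.1, x.2.1.2, x.2.2.2])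
          invFun y := (((y.2.1, y.2.2 0), (y.2.2 1, y.2.2 2)),
            ((y.2.2 3, y.2.2 4), (y.1, y.2.2 5)))
          left_inv _ := rfl
          right_inv y := Prod.ext rfl (Prod.ext rfl (FinVec.etaExpand_eq y.2.2))
          map_add' x y := by simp })

theorem nonempty_H_add_six_addEquiv (n : ℕ) :
    Nonempty (H (n + 6) ≃+ (Fin 2 → ZMod 4) × (Fin 6 → ZMod 2)) :=
  (nonempty_H_add_two_addEquiv_prod (nonempty_groupCohomology_trivial_add_four_addEquiv (n + 2))
    (nonempty_groupCohomology_sign_add_four_addEquiv (n + 1))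
    (nonempty_groupCohomology_trivial_add_four_addEquiv n)).map
      (·.trans
        { toFun x := (![x.1.1.1, x.2.2.1],
            ![x.1.1.2, x.1.2.1, x.1.2.2, x.2.1.1, x.2.1.2, x.2.2.2])
          invFun y := (((y.1 0, y.2 0), (y.2 1, y.2 2)), ((y.2 3, y.2 4), (y.1 1, y.2 5)))
          left_inv _ := rfl
          right_inv y := Prod.ext (FinVec.etaExpand_eq y.1) (FinVec.etaExpand_eq y.2)
          map_add' x y := by simp })

end Assembly

end CrystalCohomology

theorem cohomology_min81_1_2 :
    Nonempty (H 1 ≃+ ℤ) ∧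
    Nonempty (H 2 ≃+ ((Fin 2 → ℤ) × ZMod 4 × (Fin 2 → ZMod 2))) ∧
    Nonempty (H 3 ≃+ ((Fin 2 → ℤ) × (Fin 2 → ZMod 4) × ZMod 2)) ∧
    Nonempty (H 4 ≃+ (ℤ × (Fin 2 → ZMod 4) × (Fin 5 → ZMod 2))) ∧
    Nonempty (H 5 ≃+ (ℤ × ZMod 4 × (Fin 6 → ZMod 2))) ∧
    (∀ i, 6 ≤ i → Nonempty (H i ≃+ ((Fin 2 → ZMod 4) × (Fin 6 → ZMod 2)))) := by
  refine ⟨CrystalCohomology.nonempty_H_one_addEquiv, CrystalCohomology.nonempty_H_two_addEquiv,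
    CrystalCohomology.nonempty_H_three_addEquiv, CrystalCohomology.nonempty_H_four_addEquiv,
    CrystalCohomology.nonempty_H_five_addEquiv, fun i hi => ?_⟩
  obtain ⟨n, rfl⟩ := Nat.exists_eq_add_of_le' hi
  exact CrystalCohomology.nonempty_H_add_six_addEquiv n
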